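/- arXiv:1701.00420 — 3 statements merged into one kernel-verified Lean document; each statement's English description precedes it below -/
import Mathlib

section
/- Let G be a finite group and M = (D, σ, α) a connected combinatorial map. Then, as an identity in ℂ, the number N_G(M) of G-flows on M equals |G|^{|E(M)|−|V(M)|} · Σ_{λ ∈ Irr(G)} χ_λ(1)^{|V(M)|−|E(M)|+|F(M)|}, where both exponents are integers (possibly negative). -/
open Equiv

/-- The setoid on darts whose classes are the cycles (orbits) of a permutation. -/
def Equiv.Perm.cycleSetoid {D : Type*} (τ : Equiv.Perm D) : Setoid D :=
  ⟨τ.SameCycle, ⟨fun x => Equiv.Perm.SameCycle.refl τ x, fun h => h.symm, fun h h' => h.trans h'⟩⟩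

/-- The number of cycles (orbits) of a permutation. -/
noncomputable def Equiv.Perm.cycleCount {D : Type*} (τ : Equiv.Perm D) : ℕ :=
  Nat.card (Quotient τ.cycleSetoid)

/-- The ordered product of the values of `κ` around the `τ`-orbit of the dart `d`. -/
noncomputable def aroundProd {D G : Type*} [Group G] (τ : Equiv.Perm D) (κ : D → G) (d : D) : G :=
  ((List.range (Function.minimalPeriod (⇑τ) d)).map fun i => κ ((τ ^ i) d)).prod

/-- A `G`-labelling of a combinatorial map with edge involution `α`. -/
def IsGLabelling {D G : Type*} [Group G] (α : Equiv.Perm D) (κ : D → G) : Prop :=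
  ∀ d, κ (α d) = (κ d)⁻¹

/-- A `G`-flow on the combinatorial map `(D, σ, α)`. -/
def IsGFlow {D G : Type*} [Group G] (σ α : Equiv.Perm D) (κ : D → G) : Prop :=
  IsGLabelling α κ ∧ ∀ d, aroundProd σ κ d = 1

/-- A local `G`-tension on the combinatorial map `(D, σ, α)`: the product around every
face (orbit of `σ ∘ α`) is the identity. -/
def IsLocalTension {D G : Type*} [Group G] (σ α : Equiv.Perm D) (κ : D → G) : Prop :=
  IsGLabelling α κ ∧ ∀ d, aroundProd (σ * α) κ d = 1

/-- A closed walk in the combinatorial map `(D, σ, α)`, as a nonempty list of darts. -/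
def IsClosedWalk {D : Type*} (σ α : Equiv.Perm D) (W : List D) : Prop :=
  ∃ h : W ≠ [], W.Chain' (fun a b => σ.SameCycle (α a) b) ∧
    σ.SameCycle (α (W.getLast h)) (W.head h)

/-- A global `G`-tension on the combinatorial map `(D, σ, α)`. -/
def IsGlobalTension {D G : Type*} [Group G] (σ α : Equiv.Perm D) (κ : D → G) : Prop :=
  IsGLabelling α κ ∧ ∀ W : List D, IsClosedWalk σ α W → (W.map κ).prod = 1

/-- Connectivity of the combinatorial map `(D, σ, α)`: the group generated by `σ` and `α`
acts transitively on the darts. -/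
def MapConnected {D : Type*} (σ α : Equiv.Perm D) : Prop :=
  ∀ d d' : D, ∃ g ∈ Subgroup.closure ({σ, α} : Set (Equiv.Perm D)), g d = d'

/-- A covering of combinatorial maps `(D', σ', α') → (D, σ, α)`. -/
def IsMapCovering {D' D : Type*} (σ' α' : Equiv.Perm D') (σ α : Equiv.Perm D)
    (p : D' → D) : Prop :=
  Function.Surjective p ∧ (∀ d, p (σ' d) = σ (p d)) ∧ (∀ d, p (α' d) = α (p d)) ∧
    ∀ d₁ d₂, σ'.SameCycle d₁ d₂ → p d₁ = p d₂ → d₁ = d₂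

/-!
The proof evaluates a lattice state sum. By column orthogonality, `∑ λ, χ_λ(1) • χ_λ` is `|G|`
times the indicator of `1`, so imposing the flow condition at a vertex amounts to tracing a product
of representation matrices around it; expanding all traces turns `|G| ^ |V|` times the number of
flows into a sum over colourings of the darts by basis vectors of the irreducible representations.
Summing over the label of an edge, Schur orthogonality glues the indices on its two sides. The
surviving colourings are constant on faces and, by connectivity, lie in a single representation
`λ`, where there are `χ_λ(1) ^ |F|` of them, each of weight
`χ_λ(1) ^ |V| * (|G| / χ_λ(1)) ^ |E|`.
-/

section ClosedPaths

variable {K I : Type*} [CommSemiring K] [Fintype I] [DecidableEq I]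

theorem list_prod_apply_eq_sum_paths (k : ℕ) (M : ℕ → Matrix I I K) (x y : I) :
    ((List.range (k + 1)).map M).prod x y =
      ∑ q : Fin k → I, ∏ t : Fin (k + 1),
        M t ((Fin.cons x q : Fin (k + 1) → I) t) ((Fin.snoc q y : Fin (k + 1) → I) t) := by
  induction k generalizing M x with
  | zero => simp [Fin.snoc]
  | succ k ih =>
    rw [List.range_succ_eq_map, List.map_cons, List.prod_cons, List.map_map, Matrix.mul_apply,
      ← (Fin.consEquiv fun _ : Fin (k + 1) => I).sum_comp, Fintype.sum_prod_type]
    refine Finset.sum_congr rfl fun z _ => ?_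
    rw [ih, Finset.mul_sum]
    refine Finset.sum_congr rfl fun q _ => ?_
    change _ = ∏ t : Fin (k + 2), M t ((Fin.cons x (Fin.cons z q) : Fin (k + 2) → I) t)
      ((Fin.snoc (Fin.cons z q : Fin (k + 1) → I) y : Fin (k + 2) → I) t)
    rw [Fin.prod_univ_succ (n := k + 1), ← Fin.cons_snoc_eq_snoc_cons]
    simp only [Fin.cons_zero, Fin.cons_succ, Fin.val_zero, Fin.val_succ, Function.comp_apply]

theorem sum_mul_list_prod_diag_eq_sum_closed_paths (k : ℕ) [NeZero k] (M : ℕ → Matrix I I K)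
    (w : I → K) :
    ∑ x, w x * ((List.range k).map M).prod x x =
      ∑ q : Fin k → I, w (q 0) * ∏ t : Fin k, M t (q t) (q (t + 1)) := by
  obtain ⟨k, rfl⟩ := Nat.exists_eq_succ_of_ne_zero (NeZero.ne k)
  rw [← (Fin.consEquiv fun _ : Fin (k + 1) => I).sum_comp, Fintype.sum_prod_type]
  refine Finset.sum_congr rfl fun x _ => ?_
  rw [list_prod_apply_eq_sum_paths, Finset.mul_sum]
  refine Finset.sum_congr rfl fun q _ => congrArg (w x * ·) (Finset.prod_congr rfl fun t _ => ?_)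
  refine congrArg (M t _) ?_
  change _ = (Fin.cons x q : Fin (k + 1) → I) (t + 1)
  cases t using Fin.lastCases with
  | last => rw [Fin.snoc_last, Fin.last_add_one, Fin.cons_zero]
  | cast j => rw [Fin.snoc_castSucc, Fin.coeSucc_eq_succ, Fin.cons_succ]

end ClosedPaths

section Cycles

variable {D : Type*}

theorem apply_eq_of_mem_closure {J : Type*} {S : Set (Perm D)} {b : D → J}
    (hb : ∀ τ ∈ S, ∀ d, b (τ d) = b d) {g : Perm D} (hg : g ∈ Subgroup.closure S) (d : D) :
    b (g d) = b d := by
  induction hg using Subgroup.closure_induction generalizing d with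
  | mem τ hτ => exact hb τ hτ d
  | one => rfl
  | mul x y _ _ hx hy => rw [Perm.mul_apply, hx, hy]
  | inv x _ hx => rw [← hx (x⁻¹ d), ← Perm.mul_apply, mul_inv_cancel, Perm.one_apply]

theorem apply_eq_of_sameCycle {J : Type*} {τ : Perm D} {b : D → J} (hb : ∀ d, b (τ d) = b d)
    {d d' : D} (h : τ.SameCycle d d') : b d = b d' := by
  obtain ⟨n, rfl⟩ := h
  have mem_closure : τ ^ n ∈ Subgroup.closure ({τ} : Set (Perm D)) :=
    zpow_mem (Subgroup.mem_closure_singleton_self τ) n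
  exact (apply_eq_of_mem_closure (by rintro _ rfl; exact hb) mem_closure d).symm

theorem mk_cycleSetoid_apply (τ : Perm D) (d : D) :
    Quotient.mk τ.cycleSetoid (τ d) = Quotient.mk τ.cycleSetoid d :=
  Quotient.sound (Perm.sameCycle_apply_left.2 (Perm.SameCycle.refl τ d))

theorem mk_cycleSetoid_pow_apply (τ : Perm D) (n : ℕ) (d : D) :
    Quotient.mk τ.cycleSetoid ((τ ^ n) d) = Quotient.mk τ.cycleSetoid d :=
  Quotient.sound (Perm.sameCycle_pow_left.2 (Perm.SameCycle.refl τ d))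

theorem sameCycle_out (τ : Perm D) (d : D) :
    τ.SameCycle (Quotient.mk τ.cycleSetoid d).out d :=
  Quotient.mk_out (s := τ.cycleSetoid) d

variable [Finite D] (τ : Perm D)

instance neZero_minimalPeriod (d : D) : NeZero (Function.minimalPeriod τ d) :=
  ⟨(Function.minimalPeriod_pos_of_mem_periodicPts (τ.injective.mem_periodicPts d)).ne'⟩

/-- Darts as positions along the cycles of `τ`: `⟨v, t⟩` is the dart reached from the
representative of the cycle `v` in `t` steps. -/
noncomputable def cyclePositionEquiv :
    (Σ v : Quotient τ.cycleSetoid, Fin (Function.minimalPeriod τ v.out)) ≃ D :=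
  Equiv.ofBijective (fun s => (τ ^ (s.2 : ℕ)) s.1.out) <| by
    constructor
    · rintro ⟨v, s⟩ ⟨v', t⟩ h
      dsimp only at h
      obtain rfl : v = v' := by
        rw [← v.out_eq, ← v'.out_eq, ← mk_cycleSetoid_pow_apply τ s, h, mk_cycleSetoid_pow_apply]
      rw [Perm.coe_pow, Perm.coe_pow] at h
      exact congrArg _ (Fin.ext (Function.iterate_injOn_Iio_minimalPeriod s.2 t.2 h))
    · intro d
      obtain ⟨n, hn⟩ := (sameCycle_out τ d).exists_nat_pow_eq
      refine ⟨⟨Quotient.mk τ.cycleSetoid d, Fin.ofNat (Function.minimalPeriod τ _) n⟩, ?_⟩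
      dsimp only
      rw [Fin.val_ofNat, Perm.coe_pow, Function.iterate_mod_minimalPeriod_eq, ← Perm.coe_pow, hn]

theorem cyclePositionEquiv_add_one (v : Quotient τ.cycleSetoid)
    (t : Fin (Function.minimalPeriod τ v.out)) :
    cyclePositionEquiv τ ⟨v, t + 1⟩ = τ (cyclePositionEquiv τ ⟨v, t⟩) := by
  change (τ ^ ((t + 1 : Fin _) : ℕ)) v.out = τ ((τ ^ (t : ℕ)) v.out)
  rw [Fin.val_add, Fin.val_one', Nat.add_mod_mod, Perm.coe_pow,
    Function.iterate_mod_minimalPeriod_eq, ← Perm.coe_pow, pow_succ', Perm.mul_apply]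

variable {G : Type*} [Group G] (κ : D → G)

theorem aroundProd_apply (d : D) : aroundProd τ κ (τ d) = (κ d)⁻¹ * aroundProd τ κ d * κ d := by
  have hperiod : Function.minimalPeriod τ (τ d) = Function.minimalPeriod τ d :=
    Function.minimalPeriod_apply (τ.injective.mem_periodicPts d)
  have hreturn : (τ ^ Function.minimalPeriod τ d) d = d := by
    rw [Perm.coe_pow, Function.iterate_minimalPeriod]
  have hshift : κ d * aroundProd τ κ (τ d) = aroundProd τ κ d * κ d := by
    have hsplit := (List.prod_range_succ' (fun i => κ ((τ ^ i) d)) _).symm.trans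
      (List.prod_range_succ _ (Function.minimalPeriod τ d))
    simpa only [hreturn, pow_zero, Perm.one_apply, pow_succ, Perm.mul_apply, aroundProd,
      hperiod] using hsplit
  rw [mul_assoc, ← hshift, inv_mul_cancel_left]

theorem forall_aroundProd_eq_one_iff :
    (∀ d, aroundProd τ κ d = 1) ↔ ∀ v : Quotient τ.cycleSetoid, aroundProd τ κ v.out = 1 := by
  have invariant (d : D) : (aroundProd τ κ (τ d) = 1) = (aroundProd τ κ d = 1) := by
    rw [aroundProd_apply, eq_iff_iff]
    simpa only [inv_inv] using conj_eq_one_iff (a := (κ d)⁻¹) (b := aroundProd τ κ d)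
  exact ⟨fun h v => h _, fun h d =>
    (apply_eq_of_sameCycle (b := fun d => aroundProd τ κ d = 1) invariant
      (sameCycle_out τ d)).mp (h _)⟩

end Cycles

section StateSum

variable {D K I : Type*} [Fintype D] [CommSemiring K] [Fintype I] [DecidableEq I]

open scoped Classical in
theorem prod_cycles_sum_mul_list_prod_diag (τ : Perm D) (M : D → Matrix I I K) (w : I → K) :
    ∏ v : Quotient τ.cycleSetoid, ∑ x, w x *
        ((List.range (Function.minimalPeriod τ v.out)).map fun i => M ((τ ^ i) v.out)).prod x x =
      ∑ p : D → I, (∏ v : Quotient τ.cycleSetoid, w (p v.out)) * ∏ d, M d (p d) (p (τ d)) := by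
  let colouringEquiv : (D → I) ≃
      ((v : Quotient τ.cycleSetoid) → Fin (Function.minimalPeriod τ v.out) → I) :=
    ((cyclePositionEquiv τ).arrowCongr (Equiv.refl I)).symm.trans (Equiv.piCurry fun _ _ => I)
  simp only [sum_mul_list_prod_diag_eq_sum_closed_paths, Finset.prod_univ_sum,
    Fintype.piFinset_univ]
  refine (Fintype.sum_equiv colouringEquiv _ _ fun p => ?_).symm
  rw [Finset.prod_mul_distrib, ← (cyclePositionEquiv τ).prod_comp, Fintype.prod_sigma]
  refine congrArg₂ _ rfl (Finset.prod_congr rfl fun v _ => Finset.prod_congr rfl fun t _ => ?_)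
  rw [← cyclePositionEquiv_add_one]
  rfl

open scoped Classical in
theorem flow_indicator_eq_sum_colourings {G : Type*} [Group G] (σ : Perm D)
    (R : G →* Matrix I I K) (w : I → K) (N : K)
    (hregular : ∀ g, ∑ x, w x * R g x x = if g = 1 then N else 0) (κ : D → G) :
    (if ∀ d, aroundProd σ κ d = 1 then N ^ σ.cycleCount else 0) =
      ∑ p : D → I, (∏ v : Quotient σ.cycleSetoid, w (p v.out)) *
        ∏ d, R (κ d) (p d) (p (σ d)) := by
  calc (if ∀ d, aroundProd σ κ d = 1 then N ^ σ.cycleCount else 0)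
      = ∏ v : Quotient σ.cycleSetoid, if aroundProd σ κ v.out = 1 then N else 0 := by
        simp only [Finset.prod_ite_zero, forall_aroundProd_eq_one_iff, Finset.mem_univ,
          true_implies, Finset.prod_const, Finset.card_univ, Perm.cycleCount,
          Nat.card_eq_fintype_card]
    _ = ∏ v : Quotient σ.cycleSetoid, ∑ x, w x *
          ((List.range (Function.minimalPeriod σ v.out)).map
            fun i => R (κ ((σ ^ i) v.out))).prod x x := by
        refine Finset.prod_congr rfl fun v _ => ?_
        rw [← hregular, aroundProd, map_list_prod, List.map_map]
        rfl
    _ = _ := prod_cycles_sum_mul_list_prod_diag σ (fun d => R (κ d)) w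

end StateSum

section Edges

variable {D : Type*} {α : Perm D}

theorem eq_out_or_eq_apply_out (hinv : ∀ d, α (α d) = d) (d : D) :
    d = (Quotient.mk α.cycleSetoid d).out ∨ d = α (Quotient.mk α.cycleSetoid d).out := by
  obtain ⟨n, hn⟩ := sameCycle_out α d
  have even_power (m : ℤ) : α ^ (2 * m) = 1 := by
    rw [zpow_mul, zpow_two, show α * α = 1 from Equiv.ext hinv, one_zpow]
  rcases Int.even_or_odd' n with ⟨m, rfl | rfl⟩
  · rw [even_power] at hn
    exact Or.inl hn.symm
  · rw [zpow_add, even_power, one_mul, zpow_one] at hn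
    exact Or.inr hn.symm

theorem forall_darts_iff_forall_edges (hinv : ∀ d, α (α d) = d) {P : D → Prop} :
    (∀ d, P d) ↔ ∀ e : Quotient α.cycleSetoid, P e.out ∧ P (α e.out) := by
  refine ⟨fun h e => ⟨h _, h _⟩, fun h d => ?_⟩
  rcases eq_out_or_eq_apply_out hinv d with hd | hd
  · exact hd ▸ (h _).1
  · exact hd ▸ (h _).2

theorem bijective_edge_side (hinv : ∀ d, α (α d) = d) (hfpf : ∀ d, α d ≠ d) :
    Function.Bijective fun s : Quotient α.cycleSetoid × Bool =>
      if s.2 then s.1.out else α s.1.out := by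
  constructor
  · rintro ⟨e, b⟩ ⟨e', b'⟩ h
    obtain rfl : e = e' := by
      have hmk := congrArg (Quotient.mk α.cycleSetoid) h
      cases b <;> cases b' <;> simpa [mk_cycleSetoid_apply] using hmk
    rcases b with _ | _ <;> rcases b' with _ | _
    · rfl
    · exact absurd h (hfpf _)
    · exact absurd h.symm (hfpf _)
    · rfl
  · rw [Function.Surjective, forall_darts_iff_forall_edges hinv]
    exact fun e => ⟨⟨(e, true), rfl⟩, ⟨(e, false), rfl⟩⟩

theorem prod_darts_eq_prod_edges {K : Type*} [CommMonoid K] [Fintype D]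
    [Fintype (Quotient α.cycleSetoid)] (hinv : ∀ d, α (α d) = d) (hfpf : ∀ d, α d ≠ d)
    (f : D → K) :
    ∏ d, f d = ∏ e : Quotient α.cycleSetoid, f e.out * f (α e.out) := by
  rw [← (Equiv.ofBijective _ (bijective_edge_side hinv hfpf)).prod_comp, Fintype.prod_prod_type]
  refine Finset.prod_congr rfl fun e _ => ?_
  rw [Fintype.prod_bool]
  rfl

variable {G : Type*} [Group G]

theorem bijective_restrict_labelling (hinv : ∀ d, α (α d) = d) (hfpf : ∀ d, α d ≠ d) :
    Function.Bijective fun (κ : {κ : D → G // IsGLabelling α κ}) (e : Quotient α.cycleSetoid) =>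
      κ.1 e.out := by
  classical
  constructor
  · intro κ κ' h
    refine Subtype.ext (funext ((forall_darts_iff_forall_edges hinv).2 fun e => ?_))
    have agree : κ.1 e.out = κ'.1 e.out := congrFun h e
    exact ⟨agree, by rw [κ.2, κ'.2, agree]⟩
  · intro h
    let extend (d : D) : G :=
      if d = (Quotient.mk α.cycleSetoid d).out then h (Quotient.mk _ d) else (h (Quotient.mk _ d))⁻¹
    have extend_out (e : Quotient α.cycleSetoid) : extend e.out = h e := by
      simp only [extend, Quotient.out_eq, if_true]
    have extend_apply_out (e : Quotient α.cycleSetoid) : extend (α e.out) = (h e)⁻¹ := by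
      simp only [extend, mk_cycleSetoid_apply, Quotient.out_eq, hfpf, if_false]
    refine ⟨⟨extend, (forall_darts_iff_forall_edges hinv).2 fun e => ⟨?_, ?_⟩⟩, funext extend_out⟩
    · rw [extend_out, extend_apply_out]
    · rw [hinv, extend_out, extend_apply_out, inv_inv]

open scoped Classical in
theorem sum_labellings_prod_darts {K : Type*} [CommSemiring K] [Fintype D] [Fintype G]
    (hinv : ∀ d, α (α d) = d) (hfpf : ∀ d, α d ≠ d) (f : D → G → K) :
    ∑ κ : {κ : D → G // IsGLabelling α κ}, ∏ d, f d (κ.1 d) =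
      ∏ e : Quotient α.cycleSetoid, ∑ g, f e.out g * f (α e.out) g⁻¹ := by
  rw [Finset.prod_univ_sum, Fintype.piFinset_univ]
  refine Fintype.sum_equiv (Equiv.ofBijective _ (bijective_restrict_labelling hinv hfpf)) _ _
    fun κ => ?_
  rw [prod_darts_eq_prod_edges hinv hfpf]
  exact Finset.prod_congr rfl fun e _ => by rw [κ.2]; rfl

end Edges

section SchurOrthogonality

variable {K G ι : Type*} [Field K] [Group G] [Fintype G] {m : ι → Type*} [∀ i, Fintype (m i)]
  [DecidableEq ι] [∀ i, DecidableEq (m i)] [Fintype ι]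

/-- Schur orthogonality for the entries of a block-diagonal matrix representation with blocks
indexed by `ι`, the block `i` being irreducible of degree `card (m i)` and distinct blocks being
inequivalent. -/
def IsSchurOrthogonal (R : G →* Matrix (Σ i, m i) (Σ i, m i) K) : Prop :=
  ∀ x y z w, ∑ g, R g x y * R g⁻¹ z w =
    if x = w ∧ y = z ∧ x.1 = y.1 then (Nat.card G : K) / Fintype.card (m x.1) else 0

theorem IsSchurOrthogonal.sum_card_mul_diag [DecidableEq G]
    {R : G →* Matrix (Σ i, m i) (Σ i, m i) K} (hR : IsSchurOrthogonal R)
    (hm : ∀ i, (Fintype.card (m i) : K) ≠ 0) (hli : LinearIndependent K R) (g : G) :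
    ∑ x, (Fintype.card (m x.1) : K) * R g x x = if g = 1 then (Nat.card G : K) else 0 := by
  let χ : G → K := fun g => ∑ x, (Fintype.card (m x.1) : K) * R g x x
  have convolution : ∑ g, χ g⁻¹ • R g = (Nat.card G : K) • R 1 := by
    ext z w
    calc (∑ g, χ g⁻¹ • R g) z w
        = ∑ x, (Fintype.card (m x.1) : K) * ∑ g, R g z w * R g⁻¹ x x := by
          simp only [χ, Matrix.sum_apply, Matrix.smul_apply, smul_eq_mul, Finset.sum_mul,
            Finset.mul_sum]
          rw [Finset.sum_comm]
          exact Finset.sum_congr rfl fun _ _ => Finset.sum_congr rfl fun _ _ => by ring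
      _ = (Fintype.card (m z.1) : K) * ∑ g, R g z w * R g⁻¹ z z := by
          refine Finset.sum_eq_single z (fun x _ hx => ?_) (by simp)
          rw [hR, if_neg (fun h => hx h.1.symm), mul_zero]
      _ = ((Nat.card G : K) • R 1) z w := by
          rw [hR, map_one, Matrix.smul_apply, Matrix.one_apply, smul_eq_mul, mul_ite, mul_ite,
            mul_div_cancel₀ _ (hm _), mul_one, mul_zero, mul_zero]
          exact if_congr ⟨fun h => h.2.1.symm, fun h => ⟨rfl, h.symm, congrArg _ h⟩⟩ rfl rfl
  have relation : ∑ g, (χ g⁻¹ - if g = 1 then (Nat.card G : K) else 0) • R g = 0 := by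
    simp only [sub_smul, Finset.sum_sub_distrib, convolution, ite_smul, zero_smul,
      Finset.sum_ite_eq', Finset.mem_univ, if_true, sub_self]
  have coefficient := Fintype.linearIndependent_iff.1 hli _ relation g⁻¹
  simpa only [inv_inv, inv_eq_one, sub_eq_zero] using coefficient

end SchurOrthogonality

section FaceColourings

variable {D ι : Type*} {m : ι → Type*} {σ α : Perm D}

/-- The colourings of the darts by pairs `⟨i, a⟩` with `a : m i` that survive the summation over
all labellings: the colour is constant on faces, and its block `i` is constant on vertices. -/
def IsFaceColouring (σ α : Perm D) (p : D → Σ i, m i) : Prop :=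
  (∀ d, p (σ (α d)) = p d) ∧ ∀ d, (p (σ d)).1 = (p d).1

theorem IsFaceColouring.fst_eq {p : D → Σ i, m i} (hp : IsFaceColouring σ α p)
    (hconn : MapConnected σ α) (d d' : D) : (p d).1 = (p d').1 := by
  obtain ⟨g, hg, rfl⟩ := hconn d d'
  refine (apply_eq_of_mem_closure (b := fun d => (p d).1) ?_ hg d).symm
  rintro τ (rfl | rfl) d
  · exact hp.2 d
  · rw [← hp.2, hp.1]

theorem bijective_faceColouring [Nonempty D] (hconn : MapConnected σ α) :
    Function.Bijective fun s : Σ i, Quotient (σ * α).cycleSetoid → m i =>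
      (⟨fun d => ⟨s.1, s.2 (Quotient.mk _ d)⟩,
        fun d => congrArg (fun f => (⟨s.1, s.2 f⟩ : Σ i, m i)) (mk_cycleSetoid_apply (σ * α) d),
        fun _ => rfl⟩ : {p : D → Σ i, m i // IsFaceColouring σ α p}) := by
  obtain ⟨d₀⟩ := ‹Nonempty D›
  constructor
  · rintro ⟨i, a⟩ ⟨j, b⟩ h
    have colour_eq (d : D) := congrFun (congrArg Subtype.val h) d
    obtain rfl : i = j := congrArg Sigma.fst (colour_eq d₀)
    exact congrArg (Sigma.mk i) (funext (Quotient.ind fun d => sigma_mk_injective (colour_eq d)))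
  · rintro ⟨p, hp⟩
    have block (d : D) : ∃ a : m (p d₀).1, ⟨(p d₀).1, a⟩ = p d :=
      ⟨hp.fst_eq hconn d d₀ ▸ (p d).2, by
        rw [Sigma.ext_iff]
        exact ⟨hp.fst_eq hconn d₀ d, eqRec_heq _ _⟩⟩
    choose a ha using block
    refine ⟨⟨(p d₀).1, fun f => a f.out⟩, Subtype.ext (funext fun d => ?_)⟩
    exact (ha _).trans (apply_eq_of_sameCycle (τ := σ * α) hp.1 (sameCycle_out (σ * α) d))

variable {K : Type*} [Field K] [∀ i, Fintype (m i)] [Fintype ι]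

open scoped Classical in
theorem sum_faceColourings [Fintype D] [Nonempty D] (hconn : MapConnected σ α) (N : K) :
    (∑ p : D → Σ i, m i, if IsFaceColouring σ α p then
      (∏ v : Quotient σ.cycleSetoid, (Fintype.card (m (p v.out).1) : K)) *
        ∏ e : Quotient α.cycleSetoid, N / Fintype.card (m (p e.out).1) else 0) =
      ∑ i, (Fintype.card (m i) : K) ^ (σ * α).cycleCount *
        ((Fintype.card (m i) : K) ^ σ.cycleCount *
          (N / Fintype.card (m i)) ^ α.cycleCount) := by
  rw [← Finset.sum_filter, Finset.sum_subtype _ (fun _ => Finset.mem_filter_univ _),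
    ← (Equiv.ofBijective _ (bijective_faceColouring hconn)).sum_comp, Fintype.sum_sigma]
  refine Finset.sum_congr rfl fun i _ => ?_
  simp only [Equiv.ofBijective_apply, Finset.prod_const, Finset.sum_const, Finset.card_univ,
    nsmul_eq_mul, Fintype.card_fun, Nat.cast_pow, Perm.cycleCount, Nat.card_eq_fintype_card]

variable {G : Type*} [Group G] [Fintype G] [DecidableEq ι] [∀ i, DecidableEq (m i)]
  {R : G →* Matrix (Σ i, m i) (Σ i, m i) K}

open scoped Classical in
theorem sum_labellings_prod_entries [Fintype D] (hR : IsSchurOrthogonal R) (hinv : ∀ d, α (α d) = d)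
    (hfpf : ∀ d, α d ≠ d) (p : D → Σ i, m i) :
    ∑ κ : {κ : D → G // IsGLabelling α κ}, ∏ d, R (κ.1 d) (p d) (p (σ d)) =
      if IsFaceColouring σ α p then
        ∏ e : Quotient α.cycleSetoid, (Nat.card G : K) / Fintype.card (m (p e.out).1)
      else 0 := by
  have survives : IsFaceColouring σ α p ↔ ∀ e : Quotient α.cycleSetoid,
      p e.out = p (σ (α e.out)) ∧ p (σ e.out) = p (α e.out) ∧
        (p e.out).1 = (p (σ e.out)).1 := by
    rw [IsFaceColouring, forall_darts_iff_forall_edges hinv, forall_darts_iff_forall_edges hinv,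
      ← forall_and]
    refine forall_congr' fun e => ?_
    rw [hinv]
    constructor
    · rintro ⟨⟨h₁, h₂⟩, h₃, -⟩
      exact ⟨h₁.symm, h₂, h₃.symm⟩
    · rintro ⟨h₁, h₂, h₃⟩
      exact ⟨⟨h₁.symm, h₂⟩, h₃.symm, by rw [← h₁, ← h₂, h₃]⟩
  rw [sum_labellings_prod_darts hinv hfpf fun d g => R g (p d) (p (σ d))]
  simp only [hR _ _ _ _, Finset.prod_ite_zero, Finset.mem_univ, true_implies, survives]

theorem card_flows_mul_pow [Finite D] [Nonempty D] (hR : IsSchurOrthogonal R)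
    (hm : ∀ i, (Fintype.card (m i) : K) ≠ 0) (hli : LinearIndependent K R)
    (hinv : ∀ d, α (α d) = d) (hfpf : ∀ d, α d ≠ d) (hconn : MapConnected σ α) :
    (Nat.card {κ : D → G // IsGFlow σ α κ} : K) * (Nat.card G : K) ^ σ.cycleCount =
      ∑ i, (Fintype.card (m i) : K) ^ (σ * α).cycleCount *
        ((Fintype.card (m i) : K) ^ σ.cycleCount *
          ((Nat.card G : K) / Fintype.card (m i)) ^ α.cycleCount) := by
  classical
  cases nonempty_fintype D
  let flowEquiv : {κ : D → G // IsGFlow σ α κ} ≃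
      {κ : {κ : D → G // IsGLabelling α κ} // ∀ d, aroundProd σ κ.1 d = 1} :=
    (Equiv.subtypeSubtypeEquivSubtypeInter (IsGLabelling α) fun κ : D → G =>
      ∀ d, aroundProd σ κ d = 1).symm
  calc (Nat.card {κ : D → G // IsGFlow σ α κ} : K) * (Nat.card G : K) ^ σ.cycleCount
      = ∑ κ : {κ : D → G // IsGLabelling α κ},
          if ∀ d, aroundProd σ κ.1 d = 1 then (Nat.card G : K) ^ σ.cycleCount else 0 := by
        rw [← Finset.sum_filter, Finset.sum_const, nsmul_eq_mul, ← Fintype.card_subtype,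
          ← Nat.card_eq_fintype_card, Nat.card_congr flowEquiv]
    _ = ∑ p : D → Σ i, m i, (∏ v : Quotient σ.cycleSetoid, (Fintype.card (m (p v.out).1) : K)) *
          ∑ κ : {κ : D → G // IsGLabelling α κ}, ∏ d, R (κ.1 d) (p d) (p (σ d)) := by
        simp only [Finset.mul_sum]
        rw [Finset.sum_comm]
        exact Finset.sum_congr rfl fun κ _ => flow_indicator_eq_sum_colourings σ R
          (fun x => (Fintype.card (m x.1) : K)) _ (hR.sum_card_mul_diag hm hli) κ.1
    _ = _ := by
        simp only [sum_labellings_prod_entries hR hinv hfpf, mul_ite, mul_zero]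
        exact sum_faceColourings hconn _

end FaceColourings

section FDRep

open CategoryTheory Module Representation

universe u v

variable {K : Type u} [Field K] {G : Type v} [Group G]

theorem nontrivial_of_simple (V : FDRep K G) [Simple V] : Nontrivial V := by
  by_contra h
  have : Subsingleton V := not_nontrivial_iff_subsingleton.1 h
  refine id_nonzero V ?_
  ext x
  exact Subsingleton.elim _ _

/-- The matrix representation afforded by `V` in the basis `Module.finBasis K V`. -/
noncomputable def repMatrix (V : FDRep K G) :
    G →* Matrix (Fin (finrank K V)) (Fin (finrank K V)) K :=
  (LinearMap.toMatrixAlgEquiv (finBasis K V) : _ →* _).comp V.ρ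

variable {ι : Type*} [Fintype ι] [DecidableEq ι]

/-- The block-diagonal matrix representation with blocks `repMatrix (ρ i)`. -/
noncomputable def blockRepMatrix (ρ : ι → FDRep K G) :
    G →* Matrix (Σ i, Fin (finrank K (ρ i))) (Σ i, Fin (finrank K (ρ i))) K :=
  (Matrix.blockDiagonal'RingHom (fun i => Fin (finrank K (ρ i))) K).toMonoidHom.comp
    (MonoidHom.pi fun i => repMatrix (ρ i))

theorem blockRepMatrix_apply_same (ρ : ι → FDRep K G) (g : G) (i : ι)
    (a b : Fin (finrank K (ρ i))) : blockRepMatrix ρ g ⟨i, a⟩ ⟨i, b⟩ = repMatrix (ρ i) g a b :=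
  Matrix.blockDiagonal'_apply_eq (fun i => repMatrix (ρ i) g) i a b

theorem blockRepMatrix_apply_of_ne (ρ : ι → FDRep K G) (g : G) {x y : Σ i, Fin (finrank K (ρ i))}
    (h : x.1 ≠ y.1) : blockRepMatrix ρ g x y = 0 :=
  Matrix.blockDiagonal'_apply_ne (fun i => repMatrix (ρ i) g) x.2 y.2 h

variable [Fintype G]

theorem exists_hom_eq_norm_linHom (V W : FDRep K G) (A : V →ₗ[K] W) :
    ∃ f : V ⟶ W, f.hom.hom.hom = (linHom V.ρ W.ρ).norm A :=
  ⟨linHom.invariantsEquivFDRepHom V W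
    ⟨(linHom V.ρ W.ρ).norm A, fun g => self_norm_apply _ g A⟩, rfl⟩

theorem norm_linHom_apply (V W : FDRep K G) (A : V →ₗ[K] W) :
    (linHom V.ρ W.ρ).norm A = ∑ g, W.ρ g ∘ₗ A ∘ₗ V.ρ g⁻¹ := by
  simp only [Representation.norm, LinearMap.sum_apply, linHom_apply]

theorem trace_norm_linHom_self (V : FDRep K G) (A : V →ₗ[K] V) :
    LinearMap.trace K V ((linHom V.ρ V.ρ).norm A) = Nat.card G * LinearMap.trace K V A := by
  have trace_conj (g : G) :
      LinearMap.trace K V (V.ρ g ∘ₗ A ∘ₗ V.ρ g⁻¹) = LinearMap.trace K V A := by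
    rw [LinearMap.trace_comp_comm', LinearMap.comp_assoc, ← Module.End.mul_eq_comp (V.ρ g⁻¹),
      ← map_mul, inv_mul_cancel, map_one, Module.End.one_eq_id, LinearMap.comp_id]
  rw [norm_linHom_apply, map_sum, Finset.sum_congr rfl fun g _ => trace_conj g, Finset.sum_const,
    Finset.card_univ, nsmul_eq_mul, Nat.card_eq_fintype_card]

theorem sum_repMatrix_mul_repMatrix_inv (V W : FDRep K G) (a b : Fin (finrank K W))
    (c e : Fin (finrank K V)) :
    ∑ g, repMatrix W g a b * repMatrix V g⁻¹ c e =
      LinearMap.toMatrix (finBasis K V) (finBasis K W) ((linHom V.ρ W.ρ).norm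
        (Matrix.toLin (finBasis K V) (finBasis K W) (Matrix.single b c 1))) a e := by
  rw [norm_linHom_apply, map_sum, Matrix.sum_apply]
  refine Finset.sum_congr rfl fun g _ => ?_
  rw [LinearMap.toMatrix_comp _ (finBasis K W), LinearMap.toMatrix_comp _ (finBasis K V),
    LinearMap.toMatrix_toLin, ← Matrix.mul_assoc, Matrix.mul_apply, Finset.sum_eq_single c]
  · rw [Matrix.mul_single_apply_same, mul_one]
    rfl
  · intro x _ hx
    rw [Matrix.mul_single_apply_of_ne _ _ _ _ _ hx, zero_mul]
  · exact fun h => absurd (Finset.mem_univ c) h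

variable [IsAlgClosed K]

theorem norm_linHom_eq_zero (V W : FDRep K G) [Simple V] [Simple W] (h : IsEmpty (V ≅ W))
    (A : V →ₗ[K] W) : (linHom V.ρ W.ρ).norm A = 0 := by
  obtain ⟨f, hf⟩ := exists_hom_eq_norm_linHom V W A
  have hrank : finrank K (V ⟶ W) = 0 := by
    rw [FDRep.finrank_hom_simple_simple, if_neg (not_nonempty_iff.2 h)]
  have : Subsingleton (V ⟶ W) := finrank_zero_iff.1 hrank
  rw [← hf, Subsingleton.elim f 0]
  rfl

theorem finrank_smul_norm_linHom_self (V : FDRep K G) [Simple V] (A : V →ₗ[K] V) :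
    (finrank K V : K) • (linHom V.ρ V.ρ).norm A =
      (Nat.card G * LinearMap.trace K V A) • LinearMap.id := by
  obtain ⟨f, hf⟩ := exists_hom_eq_norm_linHom V V A
  obtain ⟨c, rfl⟩ := (finrank_eq_one_iff_of_nonzero' (𝟙 V) (id_nonzero V)).1
    (finrank_endomorphism_simple_eq_one K V) f
  have scalar : (linHom V.ρ V.ρ).norm A = c • LinearMap.id := hf.symm
  rw [← trace_norm_linHom_self, scalar, smul_smul, map_smul, LinearMap.trace_id, smul_eq_mul,
    mul_comm]

theorem sum_repMatrix_mul_repMatrix_inv_eq_zero (V W : FDRep K G) [Simple V] [Simple W]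
    (h : IsEmpty (V ≅ W)) (a b : Fin (finrank K W)) (c e : Fin (finrank K V)) :
    ∑ g, repMatrix W g a b * repMatrix V g⁻¹ c e = 0 := by
  rw [sum_repMatrix_mul_repMatrix_inv, norm_linHom_eq_zero V W h, map_zero, Matrix.zero_apply]

theorem finrank_mul_sum_repMatrix_mul_repMatrix_inv (V : FDRep K G) [Simple V]
    (a b c e : Fin (finrank K V)) :
    (finrank K V : K) * ∑ g, repMatrix V g a b * repMatrix V g⁻¹ c e =
      if a = e ∧ b = c then (Nat.card G : K) else 0 := by
  rw [sum_repMatrix_mul_repMatrix_inv, ← smul_eq_mul, ← Matrix.smul_apply, ← map_smul,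
    finrank_smul_norm_linHom_self, Matrix.trace_toLin_eq, map_smul, LinearMap.toMatrix_id,
    Matrix.smul_apply, Matrix.one_apply]
  obtain rfl | hbc := eq_or_ne b c
  · simp [Matrix.trace_single_eq_same]
  · simp [Matrix.trace_single_eq_of_ne _ _ _ hbc, hbc]

variable [NeZero (Nat.card G : K)]

omit [Fintype G] in
theorem finrank_cast_ne_zero [Finite G] (V : FDRep K G) [Simple V] :
    (finrank K V : K) ≠ 0 := by
  have := Fintype.ofFinite G
  have := nontrivial_of_simple V
  let a : Fin (finrank K V) := ⟨0, finrank_pos⟩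
  intro h
  have orthogonality := finrank_mul_sum_repMatrix_mul_repMatrix_inv V a a a a
  rw [h, zero_mul, if_pos ⟨rfl, rfl⟩] at orthogonality
  exact NeZero.ne _ orthogonality.symm

theorem isSchurOrthogonal_blockRepMatrix (ρ : ι → FDRep K G) (hsimple : ∀ i, Simple (ρ i))
    (hpairwise : ∀ i j, Nonempty (ρ i ≅ ρ j) → i = j) : IsSchurOrthogonal (blockRepMatrix ρ) := by
  intro x y z w
  by_cases hxy : x.1 = y.1
  · by_cases hzw : z.1 = w.1
    · obtain ⟨i, a⟩ := x
      obtain ⟨_, b⟩ := y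
      obtain ⟨j, c⟩ := z
      obtain ⟨_, e⟩ := w
      obtain rfl : i = _ := hxy
      obtain rfl : j = _ := hzw
      have := hsimple i
      have := hsimple j
      simp only [blockRepMatrix_apply_same]
      obtain rfl | hij := eq_or_ne i j
      · rw [← mul_right_inj' (finrank_cast_ne_zero (ρ i)),
          finrank_mul_sum_repMatrix_mul_repMatrix_inv, Fintype.card_fin, mul_ite, mul_zero,
          mul_div_cancel₀ _ (finrank_cast_ne_zero (ρ i))]
        simp only [Sigma.mk.injEq, heq_eq_eq, true_and, and_true]
      · rw [sum_repMatrix_mul_repMatrix_inv_eq_zero (ρ j) (ρ i)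
            ⟨fun f => hij (hpairwise _ _ ⟨f⟩).symm⟩, if_neg fun h => hij (congrArg Sigma.fst h.1)]
    · rw [if_neg fun h => hzw (by rw [← h.1, ← h.2.1, hxy])]
      simp only [blockRepMatrix_apply_of_ne ρ _ hzw, mul_zero, Finset.sum_const_zero]
  · rw [if_neg fun h => hxy h.2.2]
    simp only [blockRepMatrix_apply_of_ne ρ _ hxy, zero_mul, Finset.sum_const_zero]

section Wedderburn

universe w

section OfModule

variable (K G M : Type*) [Field K] [Group G] [AddCommGroup M] [Module K M]
  [Module (MonoidAlgebra K G) M] [IsScalarTower K (MonoidAlgebra K G) M]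

theorem asAlgebraHom_ofModule' :
    asAlgebraHom (ofModule' (k := K) (G := G) M) = Algebra.lsmul K K M :=
  (MonoidAlgebra.lift K (M →ₗ[K] M) G).apply_symm_apply _

theorem isIrreducible_ofModule' [IsSimpleModule (MonoidAlgebra K G) M] :
    (ofModule' (k := K) (G := G) M).IsIrreducible := by
  let r := ofModule' (k := K) (G := G) M
  let e : r.asModule ≃ₗ[MonoidAlgebra K G] M :=
    { r.asModuleEquiv with
      map_smul' := fun z x => (r.asModuleEquiv_map_smul z x).trans
        (LinearMap.congr_fun (DFunLike.congr_fun (asAlgebraHom_ofModule' K G M) z) _) }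
  exact (irreducible_iff_isSimpleModule_asModule r).2 (IsSimpleModule.congr e)

end OfModule

theorem simple_of_isIrreducible {K G : Type w} [Field K] [IsAlgClosed K] [Group G] [Finite G]
    [NeZero (Nat.card G : K)] {V : Type w} [AddCommGroup V] [Module K V] [FiniteDimensional K V]
    (r : Representation K G V) [r.IsIrreducible] : Simple (FDRep.of r) := by
  rw [FDRep.simple_iff_end_is_rank_one,
    ← (linHom.invariantsEquivFDRepHom (FDRep.of r) (FDRep.of r)).finrank_eq]
  exact (invariantsEquivIntertwiningMap r r).finrank_eq.trans
    (IsIrreducible.finrank_intertwiningMap_self r)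

variable {K G : Type w} [Field K] [IsAlgClosed K] [Group G] [Finite G] [NeZero (Nat.card G : K)]

theorem asAlgebraHom_eq_zero_of_isIrreducible {z : MonoidAlgebra K G}
    (hz : ∀ V : FDRep K G, Simple V → asAlgebraHom V.ρ z = 0) {M : Type w} [AddCommGroup M]
    [Module K M] [FiniteDimensional K M] (r : Representation K G M) [r.IsIrreducible] :
    asAlgebraHom r z = 0 :=
  hz (FDRep.of r) (simple_of_isIrreducible r)

theorem smul_eq_zero_of_isSimpleModule {z : MonoidAlgebra K G}
    (hz : ∀ V : FDRep K G, Simple V → asAlgebraHom V.ρ z = 0) {M : Type w} [AddCommGroup M]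
    [Module K M] [Module (MonoidAlgebra K G) M] [IsScalarTower K (MonoidAlgebra K G) M]
    [IsSimpleModule (MonoidAlgebra K G) M] (x : M) : z • x = 0 := by
  have := isIrreducible_ofModule' K G M
  have : FiniteDimensional K M := Module.Finite.trans (MonoidAlgebra K G) M
  have annihilates := asAlgebraHom_eq_zero_of_isIrreducible hz (ofModule' (k := K) (G := G) M)
  rw [asAlgebraHom_ofModule'] at annihilates
  exact LinearMap.congr_fun annihilates x

theorem eq_zero_of_asAlgebraHom_eq_zero {z : MonoidAlgebra K G}
    (hz : ∀ V : FDRep K G, Simple V → asAlgebraHom V.ρ z = 0) : z = 0 := by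
  suffices h : z ∈ Ring.jacobson (MonoidAlgebra K G) by
    rwa [IsSemisimpleRing.jacobson_eq_bot, Submodule.mem_bot] at h
  rw [Ring.jacobson_eq_sInf_isMaximal, Submodule.mem_sInf]
  intro I hI
  have : IsSimpleModule (MonoidAlgebra K G) (MonoidAlgebra K G ⧸ I) :=
    isSimpleModule_iff_isCoatom.2 (Ideal.isMaximal_def.1 hI)
  have := smul_eq_zero_of_isSimpleModule hz (Submodule.Quotient.mk (p := I) 1)
  rwa [← Submodule.Quotient.mk_smul, smul_eq_mul, mul_one, Submodule.Quotient.mk_eq_zero] at this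

theorem linearIndependent_blockRepMatrix {ι : Type*} [Fintype ι] [DecidableEq ι]
    (ρ : ι → FDRep K G)
    (hcomplete : ∀ V : FDRep K G, Simple V → ∃ i, Nonempty (V ≅ ρ i)) :
    LinearIndependent K (blockRepMatrix ρ) := by
  classical
  have := Fintype.ofFinite G
  rw [Fintype.linearIndependent_iff]
  intro c hc
  have zero_on_block (i : ι) : ∑ g, c g • (ρ i).ρ g = 0 := by
    apply (LinearMap.toMatrixAlgEquiv (finBasis K (ρ i))).injective
    ext a b
    have := congrFun (congrFun hc ⟨i, a⟩) ⟨i, b⟩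
    simp only [Matrix.sum_apply, Matrix.smul_apply, blockRepMatrix_apply_same] at this
    simp only [map_sum, map_smul, map_zero, Matrix.sum_apply, Matrix.smul_apply]
    exact this
  have zero_on_simple (V : FDRep K G) (hV : Simple V) :
      asAlgebraHom V.ρ (∑ g, MonoidAlgebra.single g (c g)) = 0 := by
    obtain ⟨i, ⟨e⟩⟩ := hcomplete V hV
    have := zero_on_block i
    simp only [FDRep.Iso.conj_ρ e, ← map_smul, ← map_sum] at this
    simp only [map_sum, asAlgebraHom_single]
    exact (LinearEquiv.map_eq_zero_iff _).1 this
  have := eq_zero_of_asAlgebraHom_eq_zero zero_on_simple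
  intro g
  have := congrArg (fun z => MonoidAlgebra.coeff z g) this
  simpa [MonoidAlgebra.coeff_sum, MonoidAlgebra.coeff_single, Finsupp.single_apply] using this

end Wedderburn

end FDRep

open CategoryTheory in
theorem count_G_flows_general.{u} {K G : Type u} [Field K] [IsAlgClosed K] [Group G] [Finite G]
    [NeZero (Nat.card G : K)] {D : Type*} [Finite D] [Nonempty D] (σ α : Perm D)
    (hinv : ∀ d, α (α d) = d) (hfpf : ∀ d, α d ≠ d) (hconn : MapConnected σ α)
    {ι : Type*} [Fintype ι] (ρ : ι → FDRep K G) (hsimple : ∀ i, Simple (ρ i))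
    (hpairwise : ∀ i j, Nonempty (ρ i ≅ ρ j) → i = j)
    (hcomplete : ∀ V : FDRep K G, Simple V → ∃ i, Nonempty (V ≅ ρ i)) :
    (Nat.card {κ : D → G // IsGFlow σ α κ} : K) =
      (Nat.card G : K) ^ ((α.cycleCount : ℤ) - (σ.cycleCount : ℤ)) *
        ∑ i, (ρ i).character 1 ^
          ((σ.cycleCount : ℤ) - (α.cycleCount : ℤ) + ((σ * α).cycleCount : ℤ)) := by
  classical
  cases nonempty_fintype G
  have card_ne_zero : (Nat.card G : K) ≠ 0 := NeZero.ne _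
  have degree_ne_zero (i : ι) : (Module.finrank K (ρ i) : K) ≠ 0 := finrank_cast_ne_zero (ρ i)
  have state_sum := card_flows_mul_pow (isSchurOrthogonal_blockRepMatrix ρ hsimple hpairwise)
    (fun i => by rw [Fintype.card_fin]; exact degree_ne_zero i)
    (linearIndependent_blockRepMatrix ρ hcomplete) hinv hfpf hconn
  rw [← mul_left_inj' (pow_ne_zero σ.cycleCount card_ne_zero), state_sum, Finset.mul_sum,
    Finset.sum_mul]
  refine Finset.sum_congr rfl fun i _ => ?_
  have hi := degree_ne_zero i
  rw [Fintype.card_fin, FDRep.char_one, zpow_add₀ hi, zpow_sub₀ hi, zpow_sub₀ card_ne_zero]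
  simp only [zpow_natCast, div_pow]
  field_simp

open CategoryTheory in
/-- The number of `G`-flows on a connected combinatorial map `M = (D, σ, α)` equals
`|G|^(|E|-|V|) · ∑_λ χ_λ(1)^(|V|-|E|+|F|)`. -/
theorem count_G_flows
    {D : Type} [Fintype D] [Nonempty D] (σ α : Equiv.Perm D)
    (hinv : ∀ d, α (α d) = d) (hfpf : ∀ d, α d ≠ d)
    (hconn : MapConnected σ α)
    {G : Type} [Group G] [Fintype G]
    (ι : Type) [Fintype ι] (ρ : ι → FDRep ℂ G)
    (hsimple : ∀ i, Simple (ρ i))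
    (hpairwise : ∀ i j, Nonempty (ρ i ≅ ρ j) → i = j)
    (hcomplete : ∀ V : FDRep ℂ G, Simple V → ∃ i, Nonempty (V ≅ ρ i)) :
    (Nat.card {κ : D → G // IsGFlow σ α κ} : ℂ)
      = (Nat.card G : ℂ) ^ ((α.cycleCount : ℤ) - (σ.cycleCount : ℤ)) *
        ∑ i, ((ρ i).character 1) ^
          ((σ.cycleCount : ℤ) - (α.cycleCount : ℤ) + ((σ * α).cycleCount : ℤ)) :=
  count_G_flows_general σ α hinv hfpf hconn ρ hsimple hpairwise hcomplete
end

section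
/- Let G be a finite group and M = (D, σ, α) a connected combinatorial map. Then, as an identity in ℂ, the number Ñ_G(M) of nowhere-identity G-flows on M equals Σ_{B ⊆ E(M)} (−1)^{|E(M)∖B|} · |G|^{|B|−|V(M)|} · ∏_{C} ( Σ_{λ ∈ Irr(G)} χ_λ(1)^{χ(C)} ), where the product runs over the components C of the spanning subgraph (V, B), χ(C) is the Euler characteristic of C, and all exponents are integers (possibly negative). -/
open Equiv

/-- The set of darts belonging to the edges in `B`. -/
def dartsIn {D : Type*} (α : Equiv.Perm D) (B : Set (Quotient α.cycleSetoid)) : Set D :=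
  {d | Quotient.mk α.cycleSetoid d ∈ B}

/-- The generating relation on vertices of the spanning subgraph `(V, B)`: for every dart `d`
of an edge in `B`, the `σ`-orbit of `d` is related to the `σ`-orbit of `α d`. -/
def spanningRel {D : Type*} (σ α : Equiv.Perm D) (B : Set (Quotient α.cycleSetoid)) :
    Quotient σ.cycleSetoid → Quotient σ.cycleSetoid → Prop := fun v w =>
  ∃ d : D, Quotient.mk α.cycleSetoid d ∈ B ∧
    Quotient.mk σ.cycleSetoid d = v ∧ Quotient.mk σ.cycleSetoid (α d) = w

open scoped Classical in
/-- The first-return map of a permutation `σ` on a subset `S`: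
`d ↦ σ^k d` for the least `k ≥ 1` with `σ^k d ∈ S` (and the identity if there is none). -/
noncomputable def firstReturn {D : Type*} (σ : Equiv.Perm D) (S : Set D) (d : D) : D :=
  if h : ∃ k, 0 < k ∧ (σ ^ k) d ∈ S then (σ ^ Nat.find h) d else d

/-- The number of orbits of `f` on the subset `S` (for `f` mapping `S` bijectively to
itself, the classes of the equivalence relation generated by `a ∼ f a` are the orbits). -/
noncomputable def orbitCountOn {D : Type*} (f : D → D) (S : Set D) : ℕ :=
  Nat.card (Quotient (Relation.EqvGen.setoid fun a b : S => f a = (b : D)))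

/-- The darts of edges in `B` whose `σ`-orbit lies in the component `C` of `(V, B)`. -/
def componentDarts {D : Type*} (σ α : Equiv.Perm D) (B : Set (Quotient α.cycleSetoid))
    (C : Quotient (Relation.EqvGen.setoid (spanningRel σ α B))) : Set D :=
  {d | Quotient.mk α.cycleSetoid d ∈ B ∧
    Quotient.mk (Relation.EqvGen.setoid (spanningRel σ α B))
      (Quotient.mk σ.cycleSetoid d) = C}

open scoped Classical in
/-- The Euler characteristic of a component `C` of the spanning subgraph `(V, B)`:
(number of `σ_B`-orbits) − (number of `α`-orbits) + (number of `σ_B∘α`-orbits) on the darts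
of `C`, and `2` for an isolated vertex. -/
noncomputable def componentEuler {D : Type*} (σ α : Equiv.Perm D)
    (B : Set (Quotient α.cycleSetoid))
    (C : Quotient (Relation.EqvGen.setoid (spanningRel σ α B))) : ℤ :=
  if (componentDarts σ α B C).Nonempty then
    (orbitCountOn (firstReturn σ (dartsIn α B)) (componentDarts σ α B C) : ℤ)
      - (orbitCountOn (⇑α) (componentDarts σ α B C) : ℤ)
      + (orbitCountOn (fun d => firstReturn σ (dartsIn α B) (α d))
          (componentDarts σ α B C) : ℤ)
  else 2

/-!
For a complete set of irreducible representations `ρ i`, of degrees `n i`, the indicator that a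
group element is `1` is `|G|⁻¹ ∑ n i * χ i`, the trace of a weighted block diagonal matrix. Writing
this indicator at every vertex and expanding the traces turns the number of flows supported on an
edge set `B` into a sum over states, which assign a matrix index to every dart. Summing out the
value of the flow on an edge, the orthogonality relations of the matrix coefficients force the state
to be constant around the faces of the submap and to stay in one block on every component. A
component in block `i` then contributes `n i` for each vertex, `|G| / n i` for each edge and `n i`
choices for each face. Inclusion-exclusion over `B` removes the flows taking the value `1`.
-/

universe u

namespace FlowCount

section Schur

open CategoryTheory Representation

theorem norm_linHom_mem_invariants {k G V W : Type*} [Field k] [Group G] [Fintype G]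
    [AddCommGroup V] [Module k V] [AddCommGroup W] [Module k W]
    (ρ : Representation k G V) (τ : Representation k G W) (T : V →ₗ[k] W) :
    (linHom ρ τ).norm T ∈ (linHom ρ τ).invariants :=
  fun g ↦ self_norm_apply _ g T

theorem trace_norm_linHom {k G V : Type*} [Field k] [Group G] [Fintype G]
    [AddCommGroup V] [Module k V] (ρ : Representation k G V) (T : Module.End k V) :
    LinearMap.trace k V ((linHom ρ ρ).norm T) = Nat.card G * LinearMap.trace k V T := by
  have hconj (g : G) : LinearMap.trace k V (linHom ρ ρ g T) = LinearMap.trace k V T := by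
    rw [linHom_apply, ← Module.End.mul_eq_comp, ← Module.End.mul_eq_comp, LinearMap.trace_mul_comm,
      mul_assoc, ← map_mul, inv_mul_cancel, map_one, mul_one]
  simp only [Representation.norm, LinearMap.sum_apply, map_sum, hconj, Finset.sum_const,
    Finset.card_univ, nsmul_eq_mul, Nat.card_eq_fintype_card]

variable {k G : Type u} [Field k] [Group G]

theorem nontrivial_of_simple (V : FDRep k G) [Simple V] : Nontrivial V := by
  by_contra h
  have : Subsingleton V := not_nontrivial_iff_subsingleton.mp h
  apply id_nonzero V
  ext x
  exact Subsingleton.elim (α := V) _ _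

variable [IsAlgClosed k]

theorem eq_zero_of_mem_invariants_linHom {V W : FDRep k G} [Simple V] [Simple W]
    (hVW : ¬ Nonempty (V ≅ W)) {f : V →ₗ[k] W} (hf : f ∈ (linHom V.ρ W.ρ).invariants) :
    f = 0 := by
  have hrank : Module.finrank k (linHom V.ρ W.ρ).invariants = 0 := by
    rw [(linHom.invariantsEquivFDRepHom V W).finrank_eq, FDRep.finrank_hom_simple_simple,
      if_neg hVW]
  have : Subsingleton (linHom V.ρ W.ρ).invariants := Module.finrank_zero_iff.mp hrank
  exact congrArg Subtype.val (Subsingleton.elim ⟨f, hf⟩ 0)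

theorem exists_eq_smul_one_of_mem_invariants_linHom {V : FDRep k G} [Simple V]
    {f : Module.End k V} (hf : f ∈ (linHom V.ρ V.ρ).invariants) : ∃ c : k, f = c • 1 := by
  have := nontrivial_of_simple V
  have hrank : Module.finrank k (linHom V.ρ V.ρ).invariants = 1 := by
    rw [(linHom.invariantsEquivFDRepHom V V).finrank_eq, finrank_endomorphism_simple_eq_one]
  have hone : (1 : Module.End k V) ∈ (linHom V.ρ V.ρ).invariants := fun g ↦ by
    ext x
    simp [linHom_apply]
  obtain ⟨c, hc⟩ := (finrank_eq_one_iff_of_nonzero' (⟨1, hone⟩ : (linHom V.ρ V.ρ).invariants)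
    (Subtype.coe_ne_coe.mp one_ne_zero)).mp hrank ⟨f, hf⟩
  exact ⟨c, (congrArg Subtype.val hc).symm⟩

theorem exists_norm_linHom_eq_smul_one [Fintype G] {V : FDRep k G} [Simple V] (T : Module.End k V) :
    ∃ c : k, (linHom V.ρ V.ρ).norm T = c • 1 ∧
      c * Module.finrank k V = Nat.card G * LinearMap.trace k V T := by
  obtain ⟨c, hc⟩ := exists_eq_smul_one_of_mem_invariants_linHom
    (norm_linHom_mem_invariants V.ρ V.ρ T)
  refine ⟨c, hc, ?_⟩
  rw [← trace_norm_linHom V.ρ, hc, map_smul, LinearMap.trace_one, smul_eq_mul]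

theorem finrank_cast_ne_zero_of_simple [Finite G] [NeZero (Nat.card G : k)] (V : FDRep k G)
    [Simple V] : (Module.finrank k V : k) ≠ 0 := by
  have := Fintype.ofFinite G
  have := nontrivial_of_simple V
  obtain ⟨x, hx⟩ := exists_ne (0 : V)
  obtain ⟨f, hf⟩ := Module.Projective.exists_dual_eq_one k hx
  obtain ⟨c, -, hc⟩ := exists_norm_linHom_eq_smul_one (V := V) (f.smulRight x)
  intro h
  rw [h, LinearMap.trace_smulRight, hf, mul_zero, mul_one] at hc
  exact NeZero.ne _ hc.symm

theorem norm_linHom_eq_smul_one [Fintype G] [NeZero (Nat.card G : k)] {V : FDRep k G} [Simple V]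
    (T : Module.End k V) :
    (linHom V.ρ V.ρ).norm T =
      (Nat.card G * LinearMap.trace k V T / Module.finrank k V : k) • 1 := by
  obtain ⟨c, hT, hc⟩ := exists_norm_linHom_eq_smul_one T
  rw [hT, ← hc, mul_div_cancel_right₀ _ (finrank_cast_ne_zero_of_simple V)]

end Schur

section MatrixCoefficients

open CategoryTheory Representation

/-- The homomorphism to matrices given by a representation and a basis of its space. -/
noncomputable def matrixRep {k G V m : Type*} [Field k] [Group G] [AddCommGroup V] [Module k V]
    [Fintype m] [DecidableEq m] (ρ : Representation k G V) (b : Module.Basis m k V) :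
    G →* Matrix m m k :=
  (LinearMap.toMatrixAlgEquiv b : Module.End k V →* Matrix m m k).comp ρ

theorem matrixRep_apply {k G V m : Type*} [Field k] [Group G] [AddCommGroup V] [Module k V]
    [Fintype m] [DecidableEq m] (ρ : Representation k G V) (b : Module.Basis m k V) (g : G) :
    matrixRep ρ b g = LinearMap.toMatrix b b (ρ g) := rfl

theorem sum_matrixRep_mul_matrixRep_inv {k G V W m n : Type*} [Field k] [Group G] [Fintype G]
    [AddCommGroup V] [Module k V] [AddCommGroup W] [Module k W]
    [Fintype m] [DecidableEq m] [Fintype n] [DecidableEq n]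
    (ρ : Representation k G V) (τ : Representation k G W)
    (b : Module.Basis m k V) (c : Module.Basis n k W) (p q : m) (r s : n) :
    ∑ g, matrixRep ρ b g p q * matrixRep τ c g⁻¹ r s =
      LinearMap.toMatrix c b ((linHom τ ρ).norm (Matrix.toLin c b (Matrix.single q r 1))) p s := by
  simp only [Representation.norm, LinearMap.sum_apply, map_sum, Matrix.sum_apply, linHom_apply,
    LinearMap.toMatrix_comp c b b, LinearMap.toMatrix_comp c c b, LinearMap.toMatrix_toLin,
    matrixRep_apply]
  refine Finset.sum_congr rfl fun g _ ↦ ?_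
  simp [Matrix.mul_apply, Matrix.single_apply, ite_and]

variable {k G : Type u} [Field k] [IsAlgClosed k] [Group G] [Fintype G]
  {m n : Type*} [Fintype m] [DecidableEq m] [Fintype n] [DecidableEq n]

theorem sum_matrixRep_mul_matrixRep_inv_of_not_iso {V W : FDRep k G} [Simple V] [Simple W]
    (hVW : ¬ Nonempty (W ≅ V)) (b : Module.Basis m k V) (c : Module.Basis n k W)
    (p q : m) (r s : n) :
    ∑ g, matrixRep V.ρ b g p q * matrixRep W.ρ c g⁻¹ r s = 0 := by
  rw [sum_matrixRep_mul_matrixRep_inv,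
    eq_zero_of_mem_invariants_linHom hVW (norm_linHom_mem_invariants _ _ _), map_zero,
    Matrix.zero_apply]

theorem sum_matrixRep_mul_matrixRep_inv_self [NeZero (Nat.card G : k)] (V : FDRep k G) [Simple V]
    (b : Module.Basis m k V) (p q r s : m) :
    ∑ g, matrixRep V.ρ b g p q * matrixRep V.ρ b g⁻¹ r s =
      if p = s ∧ q = r then (Nat.card G : k) / Module.finrank k V else 0 := by
  rw [sum_matrixRep_mul_matrixRep_inv, norm_linHom_eq_smul_one, map_smul, LinearMap.toMatrix_one,
    Matrix.trace_toLin_eq, Matrix.smul_apply, Matrix.one_apply, ite_and]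
  by_cases hqr : q = r <;> simp [hqr]

theorem character_eq_sum_matrixRep {k G : Type u} [Field k] [Group G] (V : FDRep k G)
    (b : Module.Basis m k V) (g : G) : V.character g = ∑ p, matrixRep V.ρ b g p p :=
  LinearMap.trace_eq_matrix_trace k b (V.ρ g)

theorem toMatrix_sum_character_inv_smul {k G : Type u} [Field k] [Group G] [Fintype G]
    {V W : FDRep k G} (b : Module.Basis m k V) (c : Module.Basis n k W) (p q : n) :
    LinearMap.toMatrix c c (∑ g, V.character g⁻¹ • W.ρ g) p q =
      ∑ r, ∑ g, matrixRep W.ρ c g p q * matrixRep V.ρ b g⁻¹ r r := by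
  simp only [map_sum, map_smul, ← matrixRep_apply, Matrix.sum_apply, Matrix.smul_apply, smul_eq_mul,
    character_eq_sum_matrixRep V b, mul_comm _ (matrixRep W.ρ c _ p q), Finset.mul_sum]
  exact Finset.sum_comm

theorem sum_character_inv_smul_of_not_iso {V W : FDRep k G} [Simple V] [Simple W]
    (hVW : ¬ Nonempty (V ≅ W)) : ∑ g, V.character g⁻¹ • W.ρ g = 0 := by
  let c := Module.finBasis k W
  apply (LinearMap.toMatrix c c).injective
  ext p q
  simp only [toMatrix_sum_character_inv_smul (Module.finBasis k V),
    sum_matrixRep_mul_matrixRep_inv_of_not_iso hVW, Finset.sum_const_zero, map_zero,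
    Matrix.zero_apply]

theorem sum_character_inv_smul_self [NeZero (Nat.card G : k)] (V : FDRep k G) [Simple V] :
    ∑ g, V.character g⁻¹ • V.ρ g = ((Nat.card G : k) / Module.finrank k V) • 1 := by
  let b := Module.finBasis k V
  apply (LinearMap.toMatrix b b).injective
  ext p q
  simp only [toMatrix_sum_character_inv_smul b, sum_matrixRep_mul_matrixRep_inv_self, map_smul,
    LinearMap.toMatrix_one, Matrix.smul_apply, Matrix.one_apply]
  simp [ite_and, eq_comm]

end MatrixCoefficients

section Completeness

open CategoryTheory Representation MonoidAlgebra

theorem simple_of_isIrreducible {k G V : Type u} [Field k] [IsAlgClosed k] [Group G] [Finite G]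
    [NeZero (Nat.card G : k)] [AddCommGroup V] [Module k V] [Module.Finite k V]
    (τ : Representation k G V) [τ.IsIrreducible] : Simple (FDRep.of τ) := by
  rw [FDRep.simple_iff_end_is_rank_one,
    ← (linHom.invariantsEquivFDRepHom (FDRep.of τ) (FDRep.of τ)).finrank_eq]
  exact (invariantsEquivIntertwiningMap τ τ).finrank_eq.trans
    (IsIrreducible.finrank_intertwiningMap_self τ)

theorem asAlgebraHom_ofModule'_apply {k G M : Type*} [Field k] [Group G] [AddCommGroup M]
    [Module k M] [Module (MonoidAlgebra k G) M] [IsScalarTower k (MonoidAlgebra k G) M]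
    (a : MonoidAlgebra k G) (x : M) : asAlgebraHom (ofModule' (k := k) (G := G) M) a x = a • x :=
  congrArg (· x) (congrArg (· a)
    ((MonoidAlgebra.lift k (Module.End k M) G).apply_symm_apply (Algebra.lsmul k k M)))

theorem isIrreducible_ofModule' {k G M : Type*} [Field k] [Group G] [AddCommGroup M]
    [Module k M] [Module (MonoidAlgebra k G) M] [IsScalarTower k (MonoidAlgebra k G) M]
    [IsSimpleModule (MonoidAlgebra k G) M] : (ofModule' (k := k) (G := G) M).IsIrreducible := by
  rw [irreducible_iff_isSimpleModule_asModule]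
  let e : (ofModule' (k := k) (G := G) M).asModule ≃ₗ[MonoidAlgebra k G] M :=
    { asModuleEquiv _ with
      map_smul' := fun a x ↦ (asModuleEquiv_map_smul _ a x).trans
        (asAlgebraHom_ofModule'_apply a _) }
  exact IsSimpleModule.congr e

variable {k G : Type u} [Field k] [IsAlgClosed k] [Group G] [Finite G] [NeZero (Nat.card G : k)]

theorem smul_eq_zero_of_isSimpleModule {a : MonoidAlgebra k G}
    (ha : ∀ V : FDRep k G, Simple V → asAlgebraHom V.ρ a = 0)
    {M : Type u} [AddCommGroup M] [Module k M] [Module (MonoidAlgebra k G) M]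
    [IsScalarTower k (MonoidAlgebra k G) M] [IsSimpleModule (MonoidAlgebra k G) M] (x : M) :
    a • x = 0 := by
  have : (ofModule' (k := k) (G := G) M).IsIrreducible := isIrreducible_ofModule'
  have : Module.Finite k M := Module.Finite.trans (MonoidAlgebra k G) M
  rw [← asAlgebraHom_ofModule'_apply (k := k)]
  exact congrArg (· x) (ha _ (simple_of_isIrreducible (ofModule' (k := k) (G := G) M)))

theorem eq_zero_of_forall_simple_asAlgebraHom_eq_zero {a : MonoidAlgebra k G}
    (ha : ∀ V : FDRep k G, Simple V → asAlgebraHom V.ρ a = 0) : a = 0 := by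
  suffices a ∈ Module.jacobson (MonoidAlgebra k G) (MonoidAlgebra k G) by
    rwa [IsSemisimpleModule.jacobson_eq_bot] at this
  rw [Module.jacobson, Submodule.mem_sInf]
  intro I hI
  have : IsSimpleModule (MonoidAlgebra k G) (MonoidAlgebra k G ⧸ I) :=
    isSimpleModule_iff_isCoatom.mpr hI
  rw [← Submodule.Quotient.mk_eq_zero, ← mul_one a, ← smul_eq_mul, Submodule.Quotient.mk_smul]
  exact smul_eq_zero_of_isSimpleModule ha _

theorem sum_finrank_mul_character [DecidableEq G] {ι : Type*} [Fintype ι] (ρ : ι → FDRep k G)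
    (hsimple : ∀ i, Simple (ρ i))
    (hpairwise : ∀ i j, Nonempty (ρ i ≅ ρ j) → i = j)
    (hcomplete : ∀ V : FDRep k G, Simple V → ∃ i, Nonempty (V ≅ ρ i)) (g : G) :
    ∑ i, (Module.finrank k (ρ i) : k) * (ρ i).character g =
      if g = 1 then (Nat.card G : k) else 0 := by
  have := Fintype.ofFinite G
  let a : MonoidAlgebra k G := ∑ g, single g
    (∑ i, (Module.finrank k (ρ i) : k) * (ρ i).character g⁻¹ -
      if g = 1 then (Nat.card G : k) else 0)
  have ha : a = 0 := by
    refine eq_zero_of_forall_simple_asAlgebraHom_eq_zero fun V hV ↦ ?_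
    obtain ⟨i, ⟨e⟩⟩ := hcomplete V hV
    have hi : ∑ g, (ρ i).character g⁻¹ • V.ρ g = ((Nat.card G : k) / Module.finrank k V) • 1 := by
      rw [← sum_character_inv_smul_self, FDRep.char_iso e]
    have hj (j : ι) (hj : j ≠ i) : ∑ g, (ρ j).character g⁻¹ • V.ρ g = 0 :=
      sum_character_inv_smul_of_not_iso fun ⟨e'⟩ ↦ hj (hpairwise j i ⟨e' ≪≫ e⟩)
    simp only [a, map_sum, asAlgebraHom_single, sub_smul, Finset.sum_sub_distrib, Finset.sum_smul]
    rw [Finset.sum_comm]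
    simp only [mul_smul, ← Finset.smul_sum]
    rw [Finset.sum_eq_single i (fun j _ hji ↦ by rw [hj j hji, smul_zero]) (by simp), hi,
      ← (FDRep.isoToLinearEquiv e).finrank_eq, smul_smul,
      mul_div_cancel₀ _ (finrank_cast_ne_zero_of_simple V)]
    simp [ite_smul]
  have hg := congrArg (fun b : MonoidAlgebra k G ↦ b.coeff g⁻¹) ha
  simpa [a, sub_eq_zero, Finsupp.single_apply] using hg

end Completeness

section BlockDiagonal

open CategoryTheory

/-- A block-diagonal matrix representation of `G` with blocks of sizes `n i` that satisfies the
orthogonality relations of a complete set of irreducible representations: this is all the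
state sum uses about the representation theory of `G`. -/
structure IsCompleteMatrixRep {k G ι : Type*} [Field k] [Group G] [Fintype G] [DecidableEq G]
    [Fintype ι] [DecidableEq ι] (n : ι → ℕ)
    (R : G →* Matrix (Σ i, Fin (n i)) (Σ i, Fin (n i)) k) : Prop where
  cast_ne_zero (i : ι) : (n i : k) ≠ 0
  sum_mul_diag (g : G) : ∑ x, (n x.1 : k) * R g x x = if g = 1 then (Nat.card G : k) else 0
  sum_mul_inv (x y z w : Σ i, Fin (n i)) : ∑ g, R g x y * R g⁻¹ z w =
    if x = w ∧ y = z ∧ x.1 = y.1 then (Nat.card G : k) / n x.1 else 0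

/-- The block-diagonal matrix form of the direct sum of the representations `ρ i`. -/
noncomputable def directSumRep {k G : Type u} {ι : Type*} [Field k] [Group G] [Fintype ι]
    [DecidableEq ι] (ρ : ι → FDRep k G) :
    G →* Matrix (Σ i, Fin (Module.finrank k (ρ i))) (Σ i, Fin (Module.finrank k (ρ i))) k :=
  (Matrix.blockDiagonal'RingHom (fun i ↦ Fin (Module.finrank k (ρ i))) k :
      (∀ i, Matrix (Fin (Module.finrank k (ρ i))) (Fin (Module.finrank k (ρ i))) k) →* _).comp
    (MonoidHom.pi fun i ↦ matrixRep (ρ i).ρ (Module.finBasis k (ρ i)))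

variable {k G : Type u} {ι : Type*} [Field k] [Group G] [Fintype ι] [DecidableEq ι]

theorem directSumRep_apply (ρ : ι → FDRep k G) (g : G) :
    directSumRep ρ g =
      Matrix.blockDiagonal' fun i ↦ matrixRep (ρ i).ρ (Module.finBasis k (ρ i)) g := rfl

theorem sum_directSumRep_mul_inv [IsAlgClosed k] [Fintype G] [NeZero (Nat.card G : k)]
    {ρ : ι → FDRep k G} (hsimple : ∀ i, Simple (ρ i))
    (hpairwise : ∀ i j, Nonempty (ρ i ≅ ρ j) → i = j)
    (x y z w : Σ i, Fin (Module.finrank k (ρ i))) :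
    ∑ g, directSumRep ρ g x y * directSumRep ρ g⁻¹ z w =
      if x = w ∧ y = z ∧ x.1 = y.1 then (Nat.card G : k) / Module.finrank k (ρ x.1) else 0 := by
  rcases x, y, z, w with ⟨⟨i, p⟩, ⟨i', q⟩, ⟨j, r⟩, ⟨j', s⟩⟩
  simp only [directSumRep_apply]
  by_cases hi : i = i'
  swap
  · simp [Matrix.blockDiagonal'_apply, hi]
  subst hi
  by_cases hj : j = j'
  swap
  · rw [if_neg fun h ↦ hj
      ((congrArg Sigma.fst h.2.1 : i = j).symm.trans (congrArg Sigma.fst h.1 : i = j'))]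
    simp only [Matrix.blockDiagonal'_apply_ne _ _ _ hj, mul_zero, Finset.sum_const_zero]
  subst hj
  simp only [Matrix.blockDiagonal'_apply_eq]
  by_cases hij : i = j
  · subst hij
    simp [sum_matrixRep_mul_matrixRep_inv_self]
  · rw [sum_matrixRep_mul_matrixRep_inv_of_not_iso fun e ↦ hij (hpairwise j i e).symm,
      if_neg fun h ↦ hij (congrArg Sigma.fst h.1)]

theorem isCompleteMatrixRep_directSumRep [IsAlgClosed k] [Fintype G] [DecidableEq G]
    [NeZero (Nat.card G : k)] {ρ : ι → FDRep k G} (hsimple : ∀ i, Simple (ρ i))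
    (hpairwise : ∀ i j, Nonempty (ρ i ≅ ρ j) → i = j)
    (hcomplete : ∀ V : FDRep k G, Simple V → ∃ i, Nonempty (V ≅ ρ i)) :
    IsCompleteMatrixRep (fun i ↦ Module.finrank k (ρ i)) (directSumRep ρ) where
  cast_ne_zero i := finrank_cast_ne_zero_of_simple (ρ i)
  sum_mul_diag g := by
    rw [← sum_finrank_mul_character ρ hsimple hpairwise hcomplete, Fintype.sum_sigma]
    simp only [directSumRep_apply, Matrix.blockDiagonal'_apply_eq,
      character_eq_sum_matrixRep _ (Module.finBasis k _), Finset.mul_sum]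
  sum_mul_inv := sum_directSumRep_mul_inv hsimple hpairwise

end BlockDiagonal

section TraceExpansion

open Matrix

variable {R I : Type*} [CommSemiring R] [Fintype I] [DecidableEq I]

theorem list_prod_ofFn_apply {n : ℕ} (A : Fin (n + 1) → Matrix I I R) (x y : I) :
    (List.ofFn A).prod x y = ∑ f : Fin n → I, ∏ j,
      A j ((Fin.cons x f : Fin (n + 1) → I) j) ((Fin.snoc f y : Fin (n + 1) → I) j) := by
  induction n generalizing x with
  | zero => simp [Fin.snoc]
  | succ n ih =>
    rw [List.ofFn_succ, List.prod_cons, Matrix.mul_apply,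
      ← (Fin.consEquiv fun _ : Fin (n + 1) ↦ I).sum_comp, Fintype.sum_prod_type]
    refine Finset.sum_congr rfl fun z _ ↦ ?_
    rw [ih, Finset.mul_sum]
    refine Finset.sum_congr rfl fun f _ ↦ ?_
    have hsnoc : (Fin.snoc (Fin.consEquiv (fun _ : Fin (n + 1) ↦ I) (z, f)) y : Fin (n + 2) → I) =
        Fin.cons z (Fin.snoc f y : Fin (n + 1) → I) :=
      (Fin.cons_snoc_eq_snoc_cons (β := I) z f y).symm
    rw [hsnoc, Fin.prod_univ_succ (n := n + 1)]
    simp only [Fin.consEquiv_apply, Fin.cons_zero, Fin.cons_succ]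

theorem sum_mul_list_prod_ofFn_apply_self {n : ℕ} [NeZero n] (A : Fin n → Matrix I I R)
    (w : I → R) :
    ∑ x, w x * (List.ofFn A).prod x x =
      ∑ f : Fin n → I, w (f 0) * ∏ j, A j (f j) (f (j + 1)) := by
  obtain ⟨n, rfl⟩ := Nat.exists_eq_succ_of_ne_zero (NeZero.ne n)
  rw [← (Fin.consEquiv fun _ : Fin (n + 1) ↦ I).sum_comp, Fintype.sum_prod_type]
  refine Finset.sum_congr rfl fun x _ ↦ ?_
  rw [list_prod_ofFn_apply, Finset.mul_sum]
  refine Finset.sum_congr rfl fun f _ ↦ congrArg (w x * ·) (Finset.prod_congr rfl fun j _ ↦ ?_)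
  induction j using Fin.lastCases <;> simp

end TraceExpansion

section Orbits

variable {D : Type*} (τ : Perm D)

theorem mk_eq_mk_iff_sameCycle {a b : D} :
    Quotient.mk τ.cycleSetoid a = Quotient.mk τ.cycleSetoid b ↔ τ.SameCycle a b :=
  Quotient.eq

theorem mk_apply (d : D) : Quotient.mk τ.cycleSetoid (τ d) = Quotient.mk τ.cycleSetoid d :=
  (mk_eq_mk_iff_sameCycle τ).mpr (Perm.sameCycle_apply_left.mpr (Perm.SameCycle.refl τ d))

theorem mk_pow_apply (n : ℕ) (d : D) :
    Quotient.mk τ.cycleSetoid ((τ ^ n) d) = Quotient.mk τ.cycleSetoid d :=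
  (mk_eq_mk_iff_sameCycle τ).mpr (Perm.sameCycle_pow_left.mpr (Perm.SameCycle.refl τ d))

theorem sameCycle_out (d : D) : τ.SameCycle (Quotient.mk τ.cycleSetoid d).out d :=
  (mk_eq_mk_iff_sameCycle τ).mp (Quotient.out_eq _)

theorem pow_minimalPeriod_apply (d : D) : (τ ^ Function.minimalPeriod τ d) d = d := by
  rw [← Perm.iterate_eq_pow]
  exact Function.iterate_minimalPeriod

variable [Finite D]

instance neZero_minimalPeriod (d : D) : NeZero (Function.minimalPeriod τ d) :=
  ⟨(Function.minimalPeriod_pos_of_mem_periodicPts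
    (Function.Injective.mem_periodicPts τ.injective d)).ne'⟩

theorem exists_pow_eq_of_sameCycle {a b : D} (h : τ.SameCycle a b) : ∃ n : ℕ, (τ ^ n) a = b := by
  classical
  have := Fintype.ofFinite D
  obtain ⟨n, -, -, hn⟩ := h.exists_pow_eq
  exact ⟨n, hn⟩

/-- The enumeration of `D` orbit by orbit, each starting at its chosen representative. -/
noncomputable def orbitEnumeration :
    (Σ v : Quotient τ.cycleSetoid, Fin (Function.minimalPeriod τ v.out)) ≃ D :=
  Equiv.ofBijective (fun p ↦ (τ ^ (p.2 : ℕ)) p.1.out) <| by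
    constructor
    · rintro ⟨v, j⟩ ⟨w, l⟩ h
      obtain rfl : v = w := by
        simpa only [mk_pow_apply, Quotient.out_eq] using congrArg (Quotient.mk τ.cycleSetoid) h
      simp only [← Perm.iterate_eq_pow] at h
      rw [Fin.ext ((Function.iterate_eq_iterate_iff_of_lt_minimalPeriod j.2 l.2).mp h)]
    · intro d
      obtain ⟨n, hn⟩ := exists_pow_eq_of_sameCycle τ (sameCycle_out τ d)
      refine ⟨⟨Quotient.mk _ d, Fin.ofNat _ n⟩, ?_⟩
      dsimp only
      rw [← Perm.iterate_eq_pow] at hn ⊢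
      exact Function.iterate_mod_minimalPeriod_eq.trans hn

theorem orbitEnumeration_apply (v : Quotient τ.cycleSetoid)
    (j : Fin (Function.minimalPeriod τ v.out)) :
    orbitEnumeration τ ⟨v, j⟩ = (τ ^ (j : ℕ)) v.out := rfl

theorem orbitEnumeration_zero (v : Quotient τ.cycleSetoid) :
    orbitEnumeration τ ⟨v, 0⟩ = v.out := by
  rw [orbitEnumeration_apply, Fin.val_zero, pow_zero, Perm.one_apply]

theorem orbitEnumeration_add_one (v : Quotient τ.cycleSetoid)
    (j : Fin (Function.minimalPeriod τ v.out)) :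
    orbitEnumeration τ ⟨v, j + 1⟩ = τ (orbitEnumeration τ ⟨v, j⟩) := by
  rw [orbitEnumeration_apply, orbitEnumeration_apply, ← Perm.mul_apply, ← pow_succ',
    ← Perm.iterate_eq_pow, ← Perm.iterate_eq_pow, Fin.val_add, Fin.val_one',
    Nat.add_mod_mod, Function.iterate_mod_minimalPeriod_eq]

end Orbits

section VertexExpansion

variable {D G : Type*} [Group G] (σ : Perm D) (κ : D → G)

theorem aroundProd_apply [Finite D] (d : D) :
    aroundProd σ κ (σ d) = (κ d)⁻¹ * aroundProd σ κ d * κ d := by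
  obtain ⟨m, hm⟩ := Nat.exists_eq_succ_of_ne_zero (NeZero.ne (Function.minimalPeriod σ d))
  have hper : (σ ^ (m + 1)) d = d := by
    rw [← Nat.succ_eq_add_one, ← hm, pow_minimalPeriod_apply]
  rw [aroundProd, aroundProd, hm,
    Function.minimalPeriod_apply (Function.Injective.mem_periodicPts σ.injective d), hm]
  nth_rewrite 1 [List.range_succ]
  rw [Nat.succ_eq_add_one, List.range_succ_eq_map]
  simp only [List.map_append, List.prod_append, List.map_cons, List.prod_cons, List.map_map,
    List.map_nil, List.prod_nil, mul_one, pow_zero, Perm.one_apply, inv_mul_cancel_left]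
  rw [← Perm.mul_apply, ← pow_succ, hper]
  rfl

theorem aroundProd_eq_one_iff_of_sameCycle [Finite D] {a b : D} (h : σ.SameCycle a b) :
    aroundProd σ κ a = 1 ↔ aroundProd σ κ b = 1 := by
  obtain ⟨n, rfl⟩ := exists_pow_eq_of_sameCycle σ h
  clear h
  induction n with
  | zero => rfl
  | succ n ih =>
    rw [ih, pow_succ', Perm.mul_apply, aroundProd_apply]
    rw [mul_assoc, inv_mul_eq_one, right_eq_mul]

theorem forall_aroundProd_eq_one_iff [Finite D] :
    (∀ d, aroundProd σ κ d = 1) ↔ ∀ v : Quotient σ.cycleSetoid, aroundProd σ κ v.out = 1 :=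
  ⟨fun h v ↦ h v.out, fun h d ↦
    (aroundProd_eq_one_iff_of_sameCycle σ κ (sameCycle_out σ d)).mp (h (Quotient.mk _ d))⟩

theorem map_aroundProd_out [Finite D] {M : Type*} [Monoid M] (R : G →* M)
    (v : Quotient σ.cycleSetoid) :
    R (aroundProd σ κ v.out) =
      (List.ofFn fun j ↦ R (κ (orbitEnumeration σ ⟨v, j⟩))).prod := by
  rw [aroundProd, map_list_prod, List.map_map, List.ofFn_eq_map, ← List.map_coe_finRange_eq_range,
    List.map_map]
  rfl

theorem prod_sum_mul_map_aroundProd [Fintype D] [DecidableEq D]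
    [Fintype (Quotient σ.cycleSetoid)]
    {S I : Type*} [CommSemiring S] [Fintype I] [DecidableEq I]
    (R : G →* Matrix I I S) (w : I → S) :
    ∏ v : Quotient σ.cycleSetoid, ∑ x, w x * R (aroundProd σ κ v.out) x x =
      ∑ i : D → I, (∏ v : Quotient σ.cycleSetoid, w (i v.out)) * ∏ d, R (κ d) (i d) (i (σ d)) := by
  classical
  simp_rw [map_aroundProd_out, sum_mul_list_prod_ofFn_apply_self]
  let e : (D → I) ≃ ((v : Quotient σ.cycleSetoid) → Fin (Function.minimalPeriod σ v.out) → I) :=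
    ((orbitEnumeration σ).symm.arrowCongr (Equiv.refl I)).trans (Equiv.piCurry fun _ _ ↦ I)
  have he (i : D → I) (v j) : e i v j = i (orbitEnumeration σ ⟨v, j⟩) := rfl
  rw [Finset.prod_univ_sum, Fintype.piFinset_univ, ← e.sum_comp]
  refine Finset.sum_congr rfl fun i _ ↦ ?_
  simp only [he, orbitEnumeration_zero, orbitEnumeration_add_one]
  rw [Finset.prod_mul_distrib, ← (orbitEnumeration σ).prod_comp, Fintype.prod_sigma]

end VertexExpansion

section Labellings

variable {D : Type*} {β : Perm D}

theorem eq_or_eq_apply_of_sameCycle (hβ : Function.Involutive β) {a b : D}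
    (h : β.SameCycle a b) : b = a ∨ b = β a := by
  obtain ⟨n, rfl⟩ := h
  have hsq : β ^ (2 : ℤ) = 1 := by
    ext d
    rw [zpow_two, Perm.mul_apply, hβ, Perm.one_apply]
  obtain ⟨l, rfl | rfl⟩ := n.even_or_odd'
  · exact .inl (by rw [zpow_mul, hsq, one_zpow, Perm.one_apply])
  · exact .inr (by rw [zpow_add, zpow_mul, hsq, one_zpow, one_mul, zpow_one])

theorem eq_out_or_eq_apply_out (hβ : Function.Involutive β) (d : D) :
    d = (Quotient.mk β.cycleSetoid d).out ∨ d = β (Quotient.mk β.cycleSetoid d).out :=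
  eq_or_eq_apply_of_sameCycle hβ (sameCycle_out β d)

theorem prod_eq_prod_prod_cycle (hβ : Function.Involutive β) [Fintype D] [DecidableEq D]
    [Fintype (Quotient β.cycleSetoid)] {S : Type*} [CommMonoid S] (f : D → S) :
    ∏ d, f d = ∏ e : Quotient β.cycleSetoid, ∏ d ∈ {e.out, β e.out}, f d := by
  classical
  rw [← Finset.prod_fiberwise Finset.univ (Quotient.mk β.cycleSetoid) f]
  refine Finset.prod_congr rfl fun e _ ↦ Finset.prod_congr ?_ fun _ _ ↦ rfl
  ext d
  simp only [Finset.mem_filter_univ, Finset.mem_insert, Finset.mem_singleton]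
  constructor
  · rintro rfl
    exact eq_out_or_eq_apply_out hβ d
  · rintro (rfl | rfl)
    · exact Quotient.out_eq e
    · rw [mk_apply, Quotient.out_eq]

/-- A labelling of the edges of an involution `β` whose fixed points, regarded as darts without an
edge, are labelled `1`. The involution of a spanning submap fixes the darts of deleted edges. -/
def IsSupportedLabelling {G : Type*} [Group G] (β : Perm D) (κ : D → G) : Prop :=
  IsGLabelling β κ ∧ ∀ d, β d = d → κ d = 1

open scoped Classical in
/-- The labelling whose value on the chosen representative of each edge `e` is `h e`. -/
noncomputable def extendLabelling {G : Type*} [Group G] (h : Quotient β.cycleSetoid → G) (d : D) :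
    G :=
  if d = (Quotient.mk β.cycleSetoid d).out then h (Quotient.mk β.cycleSetoid d)
  else (h (Quotient.mk β.cycleSetoid d))⁻¹

variable {G : Type*} [Group G]

theorem extendLabelling_out (h : Quotient β.cycleSetoid → G) (e : Quotient β.cycleSetoid) :
    extendLabelling h e.out = h e := by
  rw [extendLabelling, Quotient.out_eq, if_pos rfl]

theorem isSupportedLabelling_extendLabelling (hβ : Function.Involutive β)
    {h : Quotient β.cycleSetoid → G} (hh : ∀ e, β e.out = e.out → h e = 1) :
    IsSupportedLabelling β (extendLabelling h) := by
  have hone (d : D) (hd : β d = d) : h (Quotient.mk β.cycleSetoid d) = 1 := by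
    apply hh
    rcases eq_out_or_eq_apply_out hβ d with hout | hout
    · rwa [← hout]
    · rw [← hβ.injective.eq_iff, ← hout, hd, hout]
  refine ⟨fun d ↦ ?_, fun d hd ↦ by simp [extendLabelling, hone d hd]⟩
  by_cases hd : β d = d
  · simp [extendLabelling, hone d hd, hd]
  · rw [extendLabelling, extendLabelling, mk_apply]
    rcases eq_out_or_eq_apply_out hβ d with hout | hout
    · rw [if_neg (hout ▸ hd), if_pos hout]
    · have hβd : β d = (Quotient.mk β.cycleSetoid d).out := by rw [hout, hβ, ← hout]
      rw [if_pos hβd, if_neg (hβd ▸ Ne.symm hd), inv_inv]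

theorem extendLabelling_comp_out (hβ : Function.Involutive β) {κ : D → G}
    (hκ : IsSupportedLabelling β κ) :
    extendLabelling (fun e : Quotient β.cycleSetoid ↦ κ e.out) = κ := by
  funext d
  rw [extendLabelling]
  split_ifs with hd
  · rw [← hd]
  · rw [← hκ.1, ← (eq_out_or_eq_apply_out hβ d).resolve_left hd]

theorem prod_labelling_eq (hβ : Function.Involutive β) [Fintype D] [DecidableEq D]
    [Fintype (Quotient β.cycleSetoid)] {S : Type*} [CommMonoid S] (f : D → G → S) {κ : D → G}
    (hκ : IsGLabelling β κ) :
    ∏ d, f d (κ d) = ∏ e : Quotient β.cycleSetoid, if β e.out = e.out then f e.out (κ e.out)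
      else f e.out (κ e.out) * f (β e.out) (κ e.out)⁻¹ := by
  rw [prod_eq_prod_prod_cycle hβ]
  refine Finset.prod_congr rfl fun e _ ↦ ?_
  split_ifs with he
  · rw [he, Finset.pair_eq_singleton, Finset.prod_singleton]
  · rw [Finset.prod_pair (Ne.symm he), hκ]

open scoped Classical in
theorem sum_isSupportedLabelling_comp_out (hβ : Function.Involutive β) [Fintype D] [Fintype G]
    {S : Type*} [AddCommMonoid S] (F : (Quotient β.cycleSetoid → G) → S) :
    ∑ κ : D → G with IsSupportedLabelling β κ, F (fun e ↦ κ e.out) =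
      ∑ h ∈ Fintype.piFinset fun e : Quotient β.cycleSetoid ↦
        if β e.out = e.out then ({1} : Finset G) else .univ, F h := by
  have hmem (h : Quotient β.cycleSetoid → G) :
      (h ∈ Fintype.piFinset fun e : Quotient β.cycleSetoid ↦
        if β e.out = e.out then ({1} : Finset G) else .univ) ↔
        ∀ e, β e.out = e.out → h e = 1 := by
    rw [Fintype.mem_piFinset]
    refine forall_congr' fun e ↦ ?_
    by_cases he : β e.out = e.out <;> simp [he]
  exact Finset.sum_bij' (fun κ _ e ↦ κ e.out) (fun h _ ↦ extendLabelling h)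
    (fun κ hκ ↦ (hmem _).mpr fun e ↦ ((Finset.mem_filter_univ _).mp hκ).2 e.out)
    (fun h hh ↦ (Finset.mem_filter_univ _).mpr
      (isSupportedLabelling_extendLabelling hβ ((hmem h).mp hh)))
    (fun κ hκ ↦ extendLabelling_comp_out hβ ((Finset.mem_filter_univ _).mp hκ))
    (fun h _ ↦ funext (extendLabelling_out h)) fun _ _ ↦ rfl

open scoped Classical in
theorem sum_isSupportedLabelling_prod (hβ : Function.Involutive β) [Fintype D] [Fintype G]
    {S : Type*} [CommSemiring S] (f : D → G → S) :
    ∑ κ : D → G with IsSupportedLabelling β κ, ∏ d, f d (κ d) =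
      ∏ e : Quotient β.cycleSetoid, if β e.out = e.out then f e.out 1
        else ∑ g, f e.out g * f (β e.out) g⁻¹ := by
  let term (e : Quotient β.cycleSetoid) (g : G) : S :=
    if β e.out = e.out then f e.out g else f e.out g * f (β e.out) g⁻¹
  rw [Finset.sum_congr rfl fun κ hκ ↦ prod_labelling_eq hβ f ((Finset.mem_filter_univ κ).mp hκ).1,
    sum_isSupportedLabelling_comp_out hβ fun h ↦ ∏ e, term e (h e), ← Finset.prod_univ_sum]
  refine Finset.prod_congr rfl fun e _ ↦ ?_
  by_cases he : β e.out = e.out <;> simp [term, he]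

end Labellings

section StateSum

variable {D ι : Type*} {n : ι → ℕ}

/-- The condition that the orthogonality relations at the edge of `d` impose on a state `i`, which
assigns to each dart an index of a block diagonal matrix. -/
def IsConsistentAt (σ β : Perm D) (i : D → Σ j, Fin (n j)) (d : D) : Prop :=
  i (σ (β d)) = i d ∧ (i (σ d)).1 = (i d).1

theorem forall_isConsistentAt_iff {σ β : Perm D} (hβ : Function.Involutive β)
    {i : D → Σ j, Fin (n j)} :
    (∀ d, IsConsistentAt σ β i d) ↔ ∀ e : Quotient β.cycleSetoid,
      IsConsistentAt σ β i e.out ∧ IsConsistentAt σ β i (β e.out) := by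
  refine ⟨fun h e ↦ ⟨h _, h _⟩, fun h d ↦ ?_⟩
  rcases eq_out_or_eq_apply_out hβ d with hd | hd
  · exact hd ▸ (h (Quotient.mk _ d)).1
  · exact hd ▸ (h (Quotient.mk _ d)).2

open scoped Classical in
/-- The weight of a state `i`: a factor `n j` for every vertex and `q / n j` for every edge, where
`j` is the block of `i`, read off at the chosen dart of the vertex or edge; on states that are
consistent at every dart this choice does not matter. -/
noncomputable def stateWeight [Fintype D] {k : Type*} [Field k] (σ β : Perm D) (q : k)
    (i : D → Σ j, Fin (n j)) : k :=
  (∏ v : Quotient σ.cycleSetoid, (n (i v.out).1 : k)) *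
    ∏ e : Quotient β.cycleSetoid, if β e.out = e.out then 1 else q / n (i e.out).1

variable {k G : Type*} [Field k] [Group G] [Fintype G] [DecidableEq G] [Fintype ι] [DecidableEq ι]
  {R : G →* Matrix (Σ i, Fin (n i)) (Σ i, Fin (n i)) k}

open scoped Classical in
theorem edgeFactor_eq_ite_isConsistentAt (hR : IsCompleteMatrixRep n R) {β : Perm D}
    (hβ : Function.Involutive β) (σ : Perm D) (i : D → Σ j, Fin (n j)) (a : D) :
    (if β a = a then R 1 (i a) (i (σ a))
      else ∑ g, R g (i a) (i (σ a)) * R g⁻¹ (i (β a)) (i (σ (β a)))) =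
    if IsConsistentAt σ β i a ∧ IsConsistentAt σ β i (β a) then
      if β a = a then 1 else (Nat.card G : k) / n (i a).1 else 0 := by
  by_cases ha : β a = a
  · rw [if_pos ha, if_pos ha, map_one, Matrix.one_apply]
    simp only [IsConsistentAt, ha, and_self]
    exact if_congr ⟨fun h ↦ ⟨h.symm, congrArg Sigma.fst h.symm⟩, fun h ↦ h.1.symm⟩ rfl rfl
  · simp only [if_neg ha, hR.sum_mul_inv, IsConsistentAt, hβ a]
    refine if_congr ⟨?_, ?_⟩ rfl rfl
    · rintro ⟨h₁, h₂, h₃⟩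
      exact ⟨⟨h₁.symm, h₃.symm⟩, h₂, by rw [← h₁, ← h₂, h₃]⟩
    · rintro ⟨⟨h₁, h₂⟩, h₃, -⟩
      exact ⟨h₁.symm, h₃, h₂.symm⟩

open scoped Classical in
theorem indicator_mul_pow_cycleCount_eq_sum [Fintype D] (hR : IsCompleteMatrixRep n R) (σ : Perm D)
    (κ : D → G) :
    (if ∀ d, aroundProd σ κ d = 1 then (1 : k) else 0) * (Nat.card G : k) ^ σ.cycleCount =
      ∑ i : D → Σ j, Fin (n j), (∏ v : Quotient σ.cycleSetoid, (n (i v.out).1 : k)) *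
        ∏ d, R (κ d) (i d) (i (σ d)) := by
  rw [← prod_sum_mul_map_aroundProd σ κ R fun x ↦ (n x.1 : k)]
  simp only [hR.sum_mul_diag]
  rw [Finset.prod_ite_zero, Finset.prod_const, Finset.card_univ, ← Nat.card_eq_fintype_card,
    ite_mul, one_mul, zero_mul]
  simp only [forall_aroundProd_eq_one_iff, Finset.mem_univ, forall_true_left]
  rfl

open scoped Classical in
theorem card_flow_mul_pow_cycleCount [Fintype D] (hR : IsCompleteMatrixRep n R) (σ : Perm D)
    {β : Perm D} (hβ : Function.Involutive β) :
    (Nat.card {κ : D → G // IsSupportedLabelling β κ ∧ ∀ d, aroundProd σ κ d = 1} : k) *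
        (Nat.card G : k) ^ σ.cycleCount =
      ∑ i : D → Σ j, Fin (n j) with ∀ d, IsConsistentAt σ β i d,
        stateWeight σ β (Nat.card G : k) i := by
  have hcard : (Nat.card {κ : D → G // IsSupportedLabelling β κ ∧ ∀ d, aroundProd σ κ d = 1} : k) =
      ∑ κ : D → G with IsSupportedLabelling β κ, if ∀ d, aroundProd σ κ d = 1 then 1 else 0 := by
    rw [Nat.card_eq_fintype_card, Fintype.card_subtype, ← Finset.filter_filter, Finset.sum_boole]
  rw [hcard, Finset.sum_mul,
    Finset.sum_congr rfl fun κ _ ↦ indicator_mul_pow_cycleCount_eq_sum hR σ κ, Finset.sum_comm,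
    Finset.sum_filter]
  refine Finset.sum_congr rfl fun i _ ↦ ?_
  rw [← Finset.mul_sum, sum_isSupportedLabelling_prod hβ fun d g ↦ R g (i d) (i (σ d))]
  simp only [edgeFactor_eq_ite_isConsistentAt hR hβ]
  rw [Finset.prod_ite_zero, mul_ite, mul_zero]
  simp only [forall_isConsistentAt_iff hβ, Finset.mem_univ, forall_true_left, stateWeight]

end StateSum

section Components

variable {D Ω : Type*}

/-- The map `c` identifies `Ω` with the set of connected components of the combinatorial map
`(D, σ, β)`, where `β` may have fixed points. -/
def IsComponentMap (σ β : Perm D) (c : D → Ω) : Prop :=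
  Function.Surjective c ∧
    ∀ a b, c a = c b ↔ ∃ g ∈ Subgroup.closure ({σ, β} : Set (Perm D)), g a = b

theorem IsComponentMap.apply_left {σ β : Perm D} {c : D → Ω} (hc : IsComponentMap σ β c) (d : D) :
    c (σ d) = c d :=
  ((hc.2 _ _).mpr ⟨σ, Subgroup.subset_closure (.inl rfl), rfl⟩).symm

theorem IsComponentMap.apply_right {σ β : Perm D} {c : D → Ω} (hc : IsComponentMap σ β c) (d : D) :
    c (β d) = c d :=
  ((hc.2 _ _).mpr ⟨β, Subgroup.subset_closure (.inr rfl), rfl⟩).symm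

theorem apply_eq_of_mem_closure {X : Type*} {σ β : Perm D} {f : D → X} (hσ : ∀ d, f (σ d) = f d)
    (hβ : ∀ d, f (β d) = f d) {g : Perm D} (hg : g ∈ Subgroup.closure ({σ, β} : Set (Perm D)))
    (d : D) : f (g d) = f d := by
  induction hg using Subgroup.closure_induction generalizing d with
  | mem g hg =>
    rcases hg with rfl | rfl
    exacts [hσ d, hβ d]
  | one => rfl
  | mul g h _ _ ihg ihh => exact (ihg (h d)).trans (ihh d)
  | inv g _ ih => rw [← ih (g⁻¹ d), ← Perm.mul_apply, mul_inv_cancel, Perm.one_apply]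

theorem eq_of_sameCycle {X : Type*} {τ : Perm D} {f : D → X} (hf : ∀ d, f (τ d) = f d) {a b : D}
    (h : τ.SameCycle a b) : f a = f b := by
  obtain ⟨m, rfl⟩ := h
  exact (apply_eq_of_mem_closure hf hf
    (Subgroup.zpow_mem _ (Subgroup.subset_closure (.inl rfl)) m) a).symm

theorem IsComponentMap.eq_of_invariant {X : Type*} {σ β : Perm D} {c : D → Ω}
    (hc : IsComponentMap σ β c) {f : D → X} (hσ : ∀ d, f (σ d) = f d) (hβ : ∀ d, f (β d) = f d)
    {a b : D} (h : c a = c b) : f a = f b := by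
  obtain ⟨g, hg, rfl⟩ := (hc.2 a b).mp h
  exact (apply_eq_of_mem_closure hσ hβ hg a).symm

/-- The Euler characteristic of the union `K` of components of the combinatorial map `(D, σ, β)`,
in which fixed points of `β` do not count as edges. -/
noncomputable def eulerChar (σ β : Perm D) (K : Set D) : ℤ :=
  (Quotient.mk σ.cycleSetoid '' K).ncard -
    (Quotient.mk β.cycleSetoid '' ({d | β d ≠ d} ∩ K)).ncard +
    (Quotient.mk (σ * β).cycleSetoid '' K).ncard

variable {τ : Perm D}

theorem mem_image_mk_iff_out_mem {s : Set D} (hs : ∀ d, τ d ∈ s ↔ d ∈ s)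
    (v : Quotient τ.cycleSetoid) : v ∈ Quotient.mk τ.cycleSetoid '' s ↔ v.out ∈ s := by
  refine ⟨?_, fun h ↦ ⟨v.out, h, v.out_eq⟩⟩
  rintro ⟨d, hd, rfl⟩
  exact (eq_of_sameCycle (f := (· ∈ s)) (fun d ↦ propext (hs d)) (sameCycle_out τ d)).mpr hd

open scoped Classical in
theorem prod_ite_out_mem [Fintype (Quotient τ.cycleSetoid)] [Fintype Ω] {S : Type*}
    [CommMonoid S] {c : D → Ω} (hc : ∀ d, c (τ d) = c d) {s : Set D} [∀ d, Decidable (d ∈ s)]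
    (hs : ∀ d, τ d ∈ s ↔ d ∈ s) (f : Ω → S) :
    (∏ v : Quotient τ.cycleSetoid, if v.out ∈ s then f (c v.out) else 1) =
      ∏ C, f C ^ (Quotient.mk τ.cycleSetoid '' (s ∩ c ⁻¹' {C})).ncard := by
  rw [← Finset.prod_filter, ← Finset.prod_fiberwise' _ (fun v : Quotient τ.cycleSetoid ↦ c v.out) f]
  refine Finset.prod_congr rfl fun C _ ↦ ?_
  rw [Finset.prod_const, Finset.filter_filter, ← Set.ncard_coe_finset]
  congr 2
  ext v
  rw [mem_image_mk_iff_out_mem fun d ↦ by simp only [Set.mem_inter_iff, hs, Set.mem_preimage, hc]]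
  simp

open scoped Classical in
theorem prod_comp_out [Fintype (Quotient τ.cycleSetoid)] [Fintype Ω] {S : Type*}
    [CommMonoid S] {c : D → Ω} (hc : ∀ d, c (τ d) = c d) (f : Ω → S) :
    ∏ v : Quotient τ.cycleSetoid, f (c v.out) =
      ∏ C, f C ^ (Quotient.mk τ.cycleSetoid '' (c ⁻¹' {C})).ncard := by
  simpa only [Set.mem_univ, if_true, Set.univ_inter] using
    prod_ite_out_mem hc (s := Set.univ) (fun _ ↦ Iff.rfl) f

open scoped Classical in
theorem prod_ite_out_mem_const [Fintype (Quotient τ.cycleSetoid)] {S : Type*} [CommMonoid S]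
    {s : Set D} [∀ d, Decidable (d ∈ s)] (hs : ∀ d, τ d ∈ s ↔ d ∈ s) (a : S) :
    (∏ v : Quotient τ.cycleSetoid, if v.out ∈ s then a else 1) =
      a ^ (Quotient.mk τ.cycleSetoid '' s).ncard := by
  simpa using prod_ite_out_mem (c := fun _ ↦ ()) (fun _ ↦ rfl) hs fun _ ↦ a

open scoped Classical in
theorem card_invariant_mem [Fintype D] {X : Type*} [Fintype X] [DecidableEq X] {A : D → Finset X}
    (hA : ∀ d, A (τ d) = A d) :
    Finset.card {i : D → X | (∀ d, i (τ d) = i d) ∧ ∀ d, i d ∈ A d} =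
      ∏ o : Quotient τ.cycleSetoid, (A o.out).card := by
  rw [← Fintype.card_piFinset]
  refine Finset.card_bij' (fun i _ o ↦ i o.out) (fun j _ d ↦ j (Quotient.mk _ d)) ?_ ?_ ?_ ?_
  · intro i hi
    rw [Finset.mem_filter_univ] at hi
    exact Fintype.mem_piFinset.mpr fun o ↦ hi.2 o.out
  · intro j hj
    rw [Fintype.mem_piFinset] at hj
    refine (Finset.mem_filter_univ _).mpr ⟨fun d ↦ congrArg j (mk_apply τ d), fun d ↦ ?_⟩
    exact eq_of_sameCycle hA (sameCycle_out τ d) ▸ hj (Quotient.mk _ d)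
  · intro i hi
    rw [Finset.mem_filter_univ] at hi
    exact funext fun d ↦ eq_of_sameCycle hi.1 (sameCycle_out τ d)
  · exact fun j _ ↦ funext fun o ↦ congrArg j o.out_eq

end Components

section Counting

variable {D Ω ι : Type*} {n : ι → ℕ} {σ β : Perm D} {c : D → Ω}

theorem forall_isConsistentAt_and_label_iff (hc : IsComponentMap σ β c) (i : D → Σ j, Fin (n j))
    (l : Ω → ι) :
    ((∀ d, IsConsistentAt σ β i d) ∧ (fun C ↦ (i (Function.surjInv hc.1 C)).1) = l) ↔
      (∀ d, i ((σ * β) d) = i d) ∧ ∀ d, (i d).1 = l (c d) := by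
  constructor
  · rintro ⟨hi, rfl⟩
    have hlabel (d : D) : (i (β d)).1 = (i d).1 := by rw [← (hi (β d)).2, (hi d).1]
    exact ⟨fun d ↦ (hi d).1, fun d ↦ hc.eq_of_invariant (f := fun d ↦ (i d).1)
      (fun d ↦ (hi d).2) hlabel (Function.surjInv_eq hc.1 (c d)).symm⟩
  · rintro ⟨hface, hlabel⟩
    refine ⟨fun d ↦ ⟨hface d, ?_⟩, funext fun C ↦ ?_⟩
    · rw [hlabel, hlabel, hc.apply_left]
    · rw [hlabel, Function.surjInv_eq hc.1]

open scoped Classical in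
theorem card_isConsistentAt_and_label [Fintype D] [Fintype Ω] [Fintype ι]
    (hc : IsComponentMap σ β c) (l : Ω → ι) :
    Finset.card {i : D → Σ j, Fin (n j) | (∀ d, IsConsistentAt σ β i d) ∧
        (fun C ↦ (i (Function.surjInv hc.1 C)).1) = l} =
      ∏ C, n (l C) ^ (Quotient.mk (σ * β).cycleSetoid '' (c ⁻¹' {C})).ncard := by
  have hface (d : D) : c ((σ * β) d) = c d := by
    rw [Perm.mul_apply, hc.apply_left, hc.apply_right]
  let block (j : ι) : Finset (Σ j, Fin (n j)) := ({j} : Finset ι).sigma fun _ ↦ .univ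
  calc _ = Finset.card {i : D → Σ j, Fin (n j) |
        (∀ d, i ((σ * β) d) = i d) ∧ ∀ d, i d ∈ block (l (c d))} := by
        refine congrArg Finset.card (Finset.filter_congr fun i _ ↦ ?_)
        rw [forall_isConsistentAt_and_label_iff hc]
        simp only [block, Finset.mem_sigma,
          Finset.mem_singleton, Finset.mem_univ, and_true]
    _ = ∏ o : Quotient (σ * β).cycleSetoid, (block (l (c o.out))).card :=
        card_invariant_mem (A := fun d ↦ block (l (c d))) fun d ↦ by rw [hface]
    _ = _ := by
        rw [prod_comp_out hface fun C ↦ (block (l C)).card]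
        simp only [block, Finset.card_sigma, Finset.sum_singleton, Finset.card_univ,
          Fintype.card_fin]

variable {k : Type*} [Field k]

open scoped Classical in
theorem stateWeight_eq [Fintype D] [Fintype Ω] (hβ : Function.Involutive β)
    (hc : IsComponentMap σ β c) {i : D → Σ j, Fin (n j)} {l : Ω → ι}
    (hi : ∀ d, (i d).1 = l (c d)) (q : k) :
    stateWeight σ β q i =
      q ^ (Quotient.mk β.cycleSetoid '' {d | β d ≠ d}).ncard *
      ∏ C, ((n (l C) : k) ^ (Quotient.mk σ.cycleSetoid '' (c ⁻¹' {C})).ncard /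
        (n (l C) : k) ^ (Quotient.mk β.cycleSetoid '' ({d | β d ≠ d} ∩ c ⁻¹' {C})).ncard) := by
  have hmoved (d : D) : β d ∈ {d | β d ≠ d} ↔ d ∈ {d | β d ≠ d} := by
    simp only [Set.mem_ofPred_eq, hβ d, ne_comm]
  have hedge (e : Quotient β.cycleSetoid) :
      (if β e.out = e.out then 1 else q / n (i e.out).1) =
        (if e.out ∈ {d | β d ≠ d} then q else 1) *
          if e.out ∈ {d | β d ≠ d} then (n (l (c e.out)) : k)⁻¹ else 1 := by
    by_cases he : β e.out = e.out <;> simp [he, hi, div_eq_mul_inv]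
  rw [stateWeight, Finset.prod_congr rfl fun e _ ↦ hedge e]
  simp only [hi]
  rw [Finset.prod_mul_distrib, prod_ite_out_mem_const hmoved,
    prod_comp_out hc.apply_left fun C ↦ (n (l C) : k),
    prod_ite_out_mem hc.apply_right hmoved fun C ↦ (n (l C) : k)⁻¹, mul_left_comm,
    ← Finset.prod_mul_distrib]
  simp only [inv_pow, div_eq_mul_inv]

variable [Fintype Ω] [Fintype ι]

open scoped Classical in
theorem sum_stateWeight [Fintype D] (hn : ∀ j, (n j : k) ≠ 0) (hβ : Function.Involutive β)
    (hc : IsComponentMap σ β c) (q : k) :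
    ∑ i : D → Σ j, Fin (n j) with ∀ d, IsConsistentAt σ β i d, stateWeight σ β q i =
      q ^ (Quotient.mk β.cycleSetoid '' {d | β d ≠ d}).ncard *
        ∏ C, ∑ j, (n j : k) ^ eulerChar σ β (c ⁻¹' {C}) := by
  rw [Finset.prod_univ_sum, Fintype.piFinset_univ, Finset.mul_sum, ← Finset.sum_fiberwise _
    fun (i : D → Σ j, Fin (n j)) C ↦ (i (Function.surjInv hc.1 C)).1]
  refine Finset.sum_congr rfl fun l _ ↦ ?_
  rw [Finset.filter_filter, Finset.sum_congr rfl fun i hi ↦ stateWeight_eq hβ hc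
    ((forall_isConsistentAt_and_label_iff hc i l).mp ((Finset.mem_filter_univ i).mp hi)).2 q,
    Finset.sum_const, card_isConsistentAt_and_label hc, nsmul_eq_mul, mul_left_comm, Nat.cast_prod,
    ← Finset.prod_mul_distrib]
  refine congrArg _ (Finset.prod_congr rfl fun C _ ↦ ?_)
  rw [eulerChar, zpow_add₀ (hn _), zpow_sub₀ (hn _), zpow_natCast, zpow_natCast, zpow_natCast,
    Nat.cast_pow, mul_comm]

theorem card_flow_eq [Finite D] [DecidableEq ι] {G : Type*} [Group G] [Fintype G] [DecidableEq G]
    [NeZero (Nat.card G : k)]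
    {R : G →* Matrix (Σ i, Fin (n i)) (Σ i, Fin (n i)) k} (hR : IsCompleteMatrixRep n R)
    (hβ : Function.Involutive β) (hc : IsComponentMap σ β c) :
    (Nat.card {κ : D → G // IsSupportedLabelling β κ ∧ ∀ d, aroundProd σ κ d = 1} : k) =
      (Nat.card G : k) ^
          (((Quotient.mk β.cycleSetoid '' {d | β d ≠ d}).ncard : ℤ) - σ.cycleCount) *
        ∏ C, ∑ j, (n j : k) ^ eulerChar σ β (c ⁻¹' {C}) := by
  classical
  have := Fintype.ofFinite D
  have hcard := NeZero.ne (Nat.card G : k)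
  rw [zpow_sub₀ hcard, zpow_natCast, zpow_natCast, div_mul_eq_mul_div,
    eq_div_iff (pow_ne_zero _ hcard), card_flow_mul_pow_cycleCount hR σ hβ,
    sum_stateWeight hR.cast_ne_zero hβ hc]

end Counting

section FirstReturn

variable {D : Type*} {σ τ β : Perm D} {S K : Set D} {a b : D}

/-- The first point of `S` met on the `τ`-orbit of `a` after leaving `a` is `b`. -/
def ReturnsFirst (τ : Perm D) (S : Set D) (a b : D) : Prop :=
  ∃ m, 0 < m ∧ (τ ^ m) a = b ∧ b ∈ S ∧ ∀ j, 0 < j → j < m → (τ ^ j) a ∉ S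

theorem ReturnsFirst.inter (h : ReturnsFirst τ S a b) (hK : ∀ d ∈ K, τ d ∈ K) (ha : a ∈ K) :
    ReturnsFirst τ (S ∩ K) a b := by
  obtain ⟨m, hm, rfl, hS, hfirst⟩ := h
  have hpow (j : ℕ) : (τ ^ j) a ∈ K := by
    induction j with
    | zero => exact ha
    | succ j ih => exact pow_succ' τ j ▸ hK _ ih
  exact ⟨m, hm, rfl, ⟨hS, hpow m⟩, fun j hj hjm hmem ↦ hfirst j hj hjm hmem.1⟩

theorem returnsFirst_firstReturn [Finite D] (ha : a ∈ S) :
    ReturnsFirst τ S a (firstReturn τ S a) := by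
  classical
  have hex : ∃ m, 0 < m ∧ (τ ^ m) a ∈ S :=
    ⟨orderOf τ, orderOf_pos τ, by rwa [pow_orderOf_eq_one]⟩
  have hret : firstReturn τ S a = (τ ^ Nat.find hex) a := by rw [firstReturn, dif_pos hex]
  exact ⟨Nat.find hex, (Nat.find_spec hex).1, hret.symm, hret ▸ (Nat.find_spec hex).2,
    fun j hj hjm hmem ↦ Nat.find_min hex hjm ⟨hj, hmem⟩⟩

theorem ReturnsFirst.mul_right (hfix : ∀ d ∉ S, β d = d) (h : ReturnsFirst σ S (β a) b) :
    ReturnsFirst (σ * β) S a b := by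
  obtain ⟨m, hm, rfl, hS, hfirst⟩ := h
  have hpow (j : ℕ) (hj : 0 < j) (hjm : j ≤ m) : ((σ * β) ^ j) a = (σ ^ j) (β a) := by
    induction j, hj using Nat.le_induction with
    | base => rfl
    | succ j hj ih =>
      rw [pow_succ', Perm.mul_apply, ih (by lia), Perm.mul_apply, hfix _ (hfirst j hj (by lia)),
        pow_succ', Perm.mul_apply]
  exact ⟨m, hm, hpow m hm le_rfl, hS, fun j hj hjm ↦ hpow j hj hjm.le ▸ hfirst j hj hjm⟩

theorem eqvGen_iff_sameCycle [Finite D] {f : D → D} (hf : ∀ a ∈ S, ReturnsFirst τ S a (f a))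
    (a b : S) : Relation.EqvGen (fun a b : S ↦ f a = b) a b ↔ τ.SameCycle a b := by
  constructor
  · refine fun h ↦ (Setoid.eqvGen_le (s := τ.cycleSetoid.comap Subtype.val) ?_) h
    intro a b hab
    obtain ⟨m, -, hm, -⟩ := hf a a.2
    exact ⟨m, by rw [zpow_natCast, hm, hab]⟩
  · intro h
    obtain ⟨m, hm⟩ := exists_pow_eq_of_sameCycle τ h
    clear h
    induction m using Nat.strong_induction_on generalizing a with
    | _ m ih =>
      rcases Nat.eq_zero_or_pos m with rfl | hmpos
      · rw [Subtype.ext hm]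
        exact .refl b
      · obtain ⟨l, hl, hlf, hlS, hfirst⟩ := hf a a.2
        have hlm : l ≤ m := le_of_not_gt fun hlt ↦ hfirst m hmpos hlt (hm ▸ b.2)
        refine .trans _ ⟨f a, hlS⟩ _ (.rel _ _ rfl) (ih (m - l) (by lia) _ ?_)
        change (τ ^ (m - l)) (f a) = b
        rw [← hlf, ← Perm.mul_apply, ← pow_add, Nat.sub_add_cancel hlm, hm]

theorem orbitCountOn_eq_ncard_image [Finite D] {f : D → D}
    (hf : ∀ a ∈ S, ReturnsFirst τ S a (f a)) :
    orbitCountOn f S = (Quotient.mk τ.cycleSetoid '' S).ncard := by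
  have hsetoid : Relation.EqvGen.setoid (fun a b : S ↦ f a = (b : D)) =
      τ.cycleSetoid.comap Subtype.val := Setoid.ext (eqvGen_iff_sameCycle hf)
  rw [orbitCountOn, hsetoid, Nat.card_congr (Setoid.comapQuotientEquiv _ _), Set.range_comp,
    Subtype.range_coe]
  rfl

end FirstReturn

section IsolatedVertices

variable {D Ω : Type*} {σ β τ : Perm D} {c : D → Ω}

theorem IsComponentMap.sameCycle_of_forall_fixed (hc : IsComponentMap σ β c)
    (hτ : ∀ d, β d = d → τ d = σ d) {a b : D} (ha : ∀ d, τ.SameCycle a d → β d = d)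
    (hab : c a = c b) : τ.SameCycle a b := by
  have hσ (d : D) : τ.SameCycle a (σ d) ↔ τ.SameCycle a d := by
    refine ⟨fun h ↦ ?_, fun h ↦ hτ d (ha d h) ▸ Perm.sameCycle_apply_right.mpr h⟩
    obtain ⟨x, hx⟩ := τ.surjective (σ d)
    have hax : τ.SameCycle a x := Perm.sameCycle_apply_right.mp (hx ▸ h)
    exact σ.injective ((hτ x (ha x hax)).symm.trans hx) ▸ hax
  have hβ (d : D) : τ.SameCycle a (β d) ↔ τ.SameCycle a d :=
    ⟨fun h ↦ β.injective (ha _ h) ▸ h, fun h ↦ (ha d h).symm ▸ h⟩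
  exact hc.eq_of_invariant (f := τ.SameCycle a) (fun d ↦ propext (hσ d))
    (fun d ↦ propext (hβ d)) hab ▸ Perm.SameCycle.refl τ a

variable (hc : IsComponentMap σ β c) (hτ : ∀ d, β d = d → τ d = σ d)

include hc hτ

theorem IsComponentMap.image_mk_moved_inter (hcτ : ∀ d, c (τ d) = c d) {C : Ω}
    (hC : ({d | β d ≠ d} ∩ c ⁻¹' {C}).Nonempty) :
    Quotient.mk τ.cycleSetoid '' ({d | β d ≠ d} ∩ c ⁻¹' {C}) =
      Quotient.mk τ.cycleSetoid '' (c ⁻¹' {C}) := by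
  refine (Set.image_mono Set.inter_subset_right).antisymm ?_
  rintro _ ⟨d, rfl, rfl⟩
  obtain ⟨s, hs, hsd⟩ := hC
  obtain ⟨x, hdx, hx⟩ : ∃ x, τ.SameCycle d x ∧ β x ≠ x := by
    by_contra! hfixed
    exact hs (hfixed s (hc.sameCycle_of_forall_fixed hτ hfixed hsd.symm))
  exact ⟨x, ⟨hx, (eq_of_sameCycle hcτ hdx).symm⟩, (mk_eq_mk_iff_sameCycle τ).mpr hdx.symm⟩

theorem IsComponentMap.ncard_image_mk_of_moved_inter_eq_empty (hcτ : ∀ d, c (τ d) = c d) {C : Ω}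
    (hC : {d | β d ≠ d} ∩ c ⁻¹' {C} = ∅) :
    (Quotient.mk τ.cycleSetoid '' (c ⁻¹' {C})).ncard = 1 := by
  obtain ⟨a, rfl⟩ := hc.1 C
  have hfixed (d : D) (hd : τ.SameCycle a d) : β d = d := by
    by_contra hne
    exact hC.le ⟨hne, (eq_of_sameCycle hcτ hd).symm⟩
  refine Set.ncard_eq_one.mpr ⟨Quotient.mk _ a, (Set.image_subset_iff.mpr fun b hb ↦ ?_).antisymm
    (Set.singleton_subset_iff.mpr ⟨a, rfl, rfl⟩)⟩
  exact (mk_eq_mk_iff_sameCycle τ).mpr (hc.sameCycle_of_forall_fixed hτ hfixed hb.symm).symm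

omit hτ in
theorem IsComponentMap.eulerChar_eq_two {C : Ω} (hC : {d | β d ≠ d} ∩ c ⁻¹' {C} = ∅) :
    eulerChar σ β (c ⁻¹' {C}) = 2 := by
  rw [eulerChar, hC, hc.ncard_image_mk_of_moved_inter_eq_empty (fun _ _ ↦ rfl) hc.apply_left hC,
    hc.ncard_image_mk_of_moved_inter_eq_empty (τ := σ * β) (fun d hd ↦ by rw [Perm.mul_apply, hd])
      (fun d ↦ by rw [Perm.mul_apply, hc.apply_left, hc.apply_right]) hC]
  simp

end IsolatedVertices

section SpanningSubgraph

variable {D : Type*} {σ α : Perm D} {B : Set (Quotient α.cycleSetoid)}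

theorem apply_mem_dartsIn {d : D} : α d ∈ dartsIn α B ↔ d ∈ dartsIn α B := by
  rw [dartsIn, Set.mem_ofPred_eq, Set.mem_ofPred_eq, mk_apply]

variable (α B)

open scoped Classical in
/-- The involution of the spanning submap with edge set `B`: it agrees with `α` on the darts of `B`
and fixes the others. -/
noncomputable def spanningInvolution : Perm D :=
  Perm.ofSubtype (α.subtypePerm fun _ ↦ apply_mem_dartsIn :
    Perm {d // d ∈ dartsIn α B})

variable {α B}

open scoped Classical in
theorem spanningInvolution_of_mem {d : D} (hd : d ∈ dartsIn α B) :
    spanningInvolution α B d = α d :=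
  Perm.ofSubtype_apply_of_mem (α.subtypePerm fun _ ↦ apply_mem_dartsIn) hd

open scoped Classical in
theorem spanningInvolution_of_notMem {d : D} (hd : d ∉ dartsIn α B) :
    spanningInvolution α B d = d :=
  Perm.ofSubtype_apply_of_not_mem (α.subtypePerm fun _ ↦ apply_mem_dartsIn) hd

theorem involutive_spanningInvolution (hinv : Function.Involutive α) :
    Function.Involutive (spanningInvolution α B) := by
  intro d
  by_cases hd : d ∈ dartsIn α B
  · rw [spanningInvolution_of_mem hd, spanningInvolution_of_mem (apply_mem_dartsIn.mpr hd), hinv]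
  · rw [spanningInvolution_of_notMem hd, spanningInvolution_of_notMem hd]

theorem setOf_spanningInvolution_ne (hfpf : ∀ d, α d ≠ d) :
    {d | spanningInvolution α B d ≠ d} = dartsIn α B := by
  ext d
  by_cases hd : d ∈ dartsIn α B
  · simp [spanningInvolution_of_mem hd, hfpf, hd]
  · simp [spanningInvolution_of_notMem hd, hd]

variable (σ α B)

/-- The component of the spanning subgraph `(V, B)` containing the vertex of a dart. -/
def spanningComponent (d : D) : Quotient (Relation.EqvGen.setoid (spanningRel σ α B)) :=
  Quotient.mk _ (Quotient.mk σ.cycleSetoid d)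

theorem spanningComponent_apply_left (d : D) :
    spanningComponent σ α B (σ d) = spanningComponent σ α B d := by
  rw [spanningComponent, spanningComponent, mk_apply]

theorem spanningComponent_spanningInvolution (d : D) :
    spanningComponent σ α B (spanningInvolution α B d) = spanningComponent σ α B d := by
  by_cases hd : d ∈ dartsIn α B
  · rw [spanningInvolution_of_mem hd]
    exact (Quotient.sound (s := Relation.EqvGen.setoid _) (.rel _ _ ⟨d, hd, rfl, rfl⟩)).symm
  · rw [spanningInvolution_of_notMem hd]

theorem isComponentMap_spanningComponent :
    IsComponentMap σ (spanningInvolution α B) (spanningComponent σ α B) := by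
  let H := Subgroup.closure ({σ, spanningInvolution α B} : Set (Perm D))
  let orbit (d : D) : MulAction.orbitRel.Quotient H D := Quotient.mk _ d
  have horbit {g : Perm D} (hg : g ∈ H) (d : D) : orbit (g d) = orbit d :=
    Quotient.sound ⟨⟨g, hg⟩, rfl⟩
  have hσ (d : D) : orbit (σ d) = orbit d := horbit (Subgroup.subset_closure (.inl rfl)) d
  have hβ (d : D) : orbit (spanningInvolution α B d) = orbit d :=
    horbit (Subgroup.subset_closure (.inr rfl)) d
  let vertexOrbit : Quotient σ.cycleSetoid → MulAction.orbitRel.Quotient H D :=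
    Quotient.lift orbit fun _ _ h ↦ eq_of_sameCycle hσ h
  have hle : Relation.EqvGen.setoid (spanningRel σ α B) ≤ Setoid.ker vertexOrbit := by
    refine Setoid.eqvGen_le ?_
    rintro _ _ ⟨d, hd, rfl, rfl⟩
    exact ((spanningInvolution_of_mem hd ▸ hβ d : orbit (α d) = orbit d)).symm
  refine ⟨Quotient.mk_surjective.comp Quotient.mk_surjective, fun a b ↦ ⟨fun h ↦ ?_, ?_⟩⟩
  · obtain ⟨g, hg⟩ : MulAction.orbitRel H D b a := Quotient.exact (hle (Quotient.exact h)).symm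
    exact ⟨g, g.2, hg⟩
  · rintro ⟨g, hg, rfl⟩
    exact (apply_eq_of_mem_closure (spanningComponent_apply_left σ α B)
      (spanningComponent_spanningInvolution σ α B) hg a).symm

variable {α}

theorem returnsFirst_spanningInvolution {a : D} (ha : a ∈ dartsIn α B) :
    ReturnsFirst (spanningInvolution α B) (dartsIn α B) a (α a) :=
  ⟨1, one_pos, spanningInvolution_of_mem ha, apply_mem_dartsIn.mpr ha, fun _ _ _ ↦ by lia⟩

variable [Finite D]

theorem returnsFirst_mul_spanningInvolution {a : D} (ha : a ∈ dartsIn α B) :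
    ReturnsFirst (σ * spanningInvolution α B) (dartsIn α B) a
      (firstReturn σ (dartsIn α B) (α a)) :=
  .mul_right (fun _ hd ↦ spanningInvolution_of_notMem hd) <| by
    rw [spanningInvolution_of_mem ha]
    exact returnsFirst_firstReturn (apply_mem_dartsIn.mpr ha)

theorem orbitCountOn_componentDarts (hfpf : ∀ d, α d ≠ d) {τ : Perm D} {f : D → D}
    (hτ : ∀ d, spanningComponent σ α B (τ d) = spanningComponent σ α B d)
    (hf : ∀ a ∈ dartsIn α B, ReturnsFirst τ (dartsIn α B) a (f a))
    (C : Quotient (Relation.EqvGen.setoid (spanningRel σ α B))) :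
    orbitCountOn f (componentDarts σ α B C) = (Quotient.mk τ.cycleSetoid ''
      ({d | spanningInvolution α B d ≠ d} ∩ spanningComponent σ α B ⁻¹' {C})).ncard := by
  rw [setOf_spanningInvolution_ne hfpf]
  exact orbitCountOn_eq_ncard_image fun a ha ↦
    (hf a ha.1).inter (fun d hd ↦ (hτ d).trans hd) ha.2

theorem ncard_image_mk_spanningInvolution (hfpf : ∀ d, α d ≠ d) :
    (Quotient.mk (spanningInvolution α B).cycleSetoid ''
      {d | spanningInvolution α B d ≠ d}).ncard = Nat.card B := by
  have hα (a : D) (ha : a ∈ dartsIn α B) : ReturnsFirst α (dartsIn α B) a (α a) :=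
    ⟨1, one_pos, rfl, apply_mem_dartsIn.mpr ha, fun _ _ _ ↦ by lia⟩
  rw [setOf_spanningInvolution_ne hfpf,
    ← orbitCountOn_eq_ncard_image fun a ↦ returnsFirst_spanningInvolution B,
    orbitCountOn_eq_ncard_image hα]
  exact congrArg Set.ncard (Set.image_preimage_eq B Quotient.mk_surjective)

theorem componentEuler_eq_eulerChar (hfpf : ∀ d, α d ≠ d)
    (C : Quotient (Relation.EqvGen.setoid (spanningRel σ α B))) :
    componentEuler σ α B C =
      eulerChar σ (spanningInvolution α B) (spanningComponent σ α B ⁻¹' {C}) := by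
  have hc := isComponentMap_spanningComponent σ α B
  have hface (d : D) : spanningComponent σ α B ((σ * spanningInvolution α B) d) =
      spanningComponent σ α B d := by rw [Perm.mul_apply, hc.apply_left, hc.apply_right]
  have hdarts : componentDarts σ α B C =
      {d | spanningInvolution α B d ≠ d} ∩ spanningComponent σ α B ⁻¹' {C} := by
    rw [setOf_spanningInvolution_ne hfpf]
    rfl
  rw [componentEuler]
  split_ifs with hC
  · rw [orbitCountOn_componentDarts σ B hfpf hc.apply_left fun a ↦ returnsFirst_firstReturn,
      orbitCountOn_componentDarts σ B hfpf hc.apply_right fun a ↦ returnsFirst_spanningInvolution B,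
      orbitCountOn_componentDarts σ B hfpf hface fun a ↦ returnsFirst_mul_spanningInvolution σ B]
    rw [hdarts] at hC
    rw [eulerChar, hc.image_mk_moved_inter (fun _ _ ↦ rfl) hc.apply_left hC,
      hc.image_mk_moved_inter (fun d hd ↦ by rw [Perm.mul_apply, hd]) hface hC]
  · rw [hdarts, Set.not_nonempty_iff_eq_empty] at hC
    exact (hc.eulerChar_eq_two hC).symm

end SpanningSubgraph

section InclusionExclusion

theorem card_forall_not {E X R : Type*} [Finite E] [Finite X] [CommRing R] (P : E → X → Prop) :
    (Nat.card {x // ∀ e, ¬ P e x} : R) =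
      ∑ᶠ B : Set E, (-1) ^ Nat.card ↥Bᶜ * (Nat.card {x // ∀ e ∉ B, P e x} : R) := by
  classical
  have := Fintype.ofFinite E
  have := Fintype.ofFinite X
  have hcount := congrArg (Int.cast (R := R))
    (Finset.inclusion_exclusion_card_inf_compl Finset.univ fun e ↦ {x | P e x})
  rw [Finset.powerset_univ, ← compl_bijective.sum_comp] at hcount
  push_cast at hcount
  rw [finsum_eq_sum_of_fintype, ← Fintype.finsetEquivSet.sum_comp, Nat.card_eq_fintype_card,
    Fintype.card_subtype]
  convert hcount using 3
  · ext x
    simp [Finset.mem_inf]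
  · rw [Fintype.finsetEquivSet_apply, ← Finset.coe_compl, Nat.card_coe_set_eq,
      Set.ncard_coe_finset]
  · rw [Nat.card_eq_fintype_card, Fintype.card_subtype]
    congr 2
    ext x
    simp [Finset.mem_inf]

variable {D G : Type*} [Group G] {σ α : Perm D} {κ : D → G}

theorem out_eq_one_iff (hα : Function.Involutive α) (hκ : IsGLabelling α κ) (d : D) :
    κ (Quotient.mk α.cycleSetoid d).out = 1 ↔ κ d = 1 := by
  rcases eq_out_or_eq_apply_out hα d with h | h
  · rw [← h]
  · conv_rhs => rw [h, hκ, inv_eq_one]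

theorem card_nowhere_identity_flow [Finite D] [Finite G] {R : Type*} [CommRing R]
    (hα : Function.Involutive α) :
    (Nat.card {κ : D → G // IsGFlow σ α κ ∧ ∀ d, κ d ≠ 1} : R) =
      ∑ᶠ B : Set (Quotient α.cycleSetoid), (-1) ^ Nat.card ↥Bᶜ *
        (Nat.card {κ : D → G // IsGFlow σ α κ ∧ ∀ d ∉ dartsIn α B, κ d = 1} : R) := by
  have hedge (κ : {κ : D → G // IsGFlow σ α κ}) (B : Set (Quotient α.cycleSetoid)) :
      (∀ e ∉ B, κ.1 e.out = 1) ↔ ∀ d ∉ dartsIn α B, κ.1 d = 1 := by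
    simp_rw [Quotient.forall, out_eq_one_iff hα κ.2.1]
    rfl
  have hne (κ : {κ : D → G // IsGFlow σ α κ}) :
      (∀ e : Quotient α.cycleSetoid, κ.1 e.out ≠ 1) ↔ ∀ d, κ.1 d ≠ 1 := by
    simp_rw [Quotient.forall, ne_eq, out_eq_one_iff hα κ.2.1]
  have hcount := card_forall_not (R := R)
    fun (e : Quotient α.cycleSetoid) (κ : {κ : D → G // IsGFlow σ α κ}) ↦ κ.1 e.out = 1
  simp_rw [hedge, ← ne_eq, hne] at hcount
  simp_rw [← Nat.card_congr (Equiv.subtypeSubtypeEquivSubtypeInter (IsGFlow σ α) _), hcount]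

theorem isSupportedLabelling_spanningInvolution_iff (hfpf : ∀ d, α d ≠ d)
    {B : Set (Quotient α.cycleSetoid)} :
    IsSupportedLabelling (spanningInvolution α B) κ ↔
      IsGLabelling α κ ∧ ∀ d ∉ dartsIn α B, κ d = 1 := by
  have hsupp : (∀ d, spanningInvolution α B d = d → κ d = 1) ↔ ∀ d ∉ dartsIn α B, κ d = 1 :=
    forall_congr' fun d ↦ imp_congr_left <| by
      rw [← setOf_spanningInvolution_ne hfpf, Set.mem_ofPred_eq, not_not]
  rw [IsSupportedLabelling, hsupp]
  refine and_congr_left fun hoff ↦ forall_congr' fun d ↦ ?_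
  by_cases hd : d ∈ dartsIn α B
  · rw [spanningInvolution_of_mem hd]
  · rw [spanningInvolution_of_notMem hd, hoff d hd, hoff _ (mt apply_mem_dartsIn.mp hd)]

end InclusionExclusion

end FlowCount

open CategoryTheory FlowCount in
theorem count_nowhere_identity_G_flows_general {D ι : Type*} [Finite D] [Fintype ι]
    {k G : Type u} [Field k] [IsAlgClosed k] [Group G] [Finite G] [NeZero (Nat.card G : k)]
    (σ α : Equiv.Perm D) (hinv : ∀ d, α (α d) = d) (hfpf : ∀ d, α d ≠ d)
    (ρ : ι → FDRep k G) (hsimple : ∀ i, Simple (ρ i))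
    (hpairwise : ∀ i j, Nonempty (ρ i ≅ ρ j) → i = j)
    (hcomplete : ∀ V : FDRep k G, Simple V → ∃ i, Nonempty (V ≅ ρ i)) :
    (Nat.card {κ : D → G // IsGFlow σ α κ ∧ ∀ d, κ d ≠ 1} : k)
      = ∑ᶠ B : Set (Quotient α.cycleSetoid),
          (-1 : k) ^ (Nat.card ↥Bᶜ) *
            (Nat.card G : k) ^ ((Nat.card ↥B : ℤ) - (σ.cycleCount : ℤ)) *
            ∏ᶠ C : Quotient (Relation.EqvGen.setoid (spanningRel σ α B)),
              ∑ i, ((ρ i).character 1) ^ (componentEuler σ α B C) := by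
  classical
  have := Fintype.ofFinite D
  have := Fintype.ofFinite G
  rw [card_nowhere_identity_flow hinv]
  refine finsum_congr fun B ↦ ?_
  have hflow (κ : D → G) : (IsGFlow σ α κ ∧ ∀ d ∉ dartsIn α B, κ d = 1) ↔
      IsSupportedLabelling (spanningInvolution α B) κ ∧ ∀ d, aroundProd σ κ d = 1 := by
    rw [isSupportedLabelling_spanningInvolution_iff hfpf, IsGFlow, and_right_comm]
  simp_rw [hflow]
  rw [card_flow_eq (isCompleteMatrixRep_directSumRep hsimple hpairwise hcomplete)
      (involutive_spanningInvolution hinv) (isComponentMap_spanningComponent σ α B),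
    ncard_image_mk_spanningInvolution B hfpf, finprod_eq_prod_of_fintype, mul_assoc]
  simp_rw [FDRep.char_one, componentEuler_eq_eulerChar σ B hfpf]

open CategoryTheory in
/-- The number of nowhere-identity `G`-flows on a connected combinatorial map
`M = (D, σ, α)`, by inclusion-exclusion over subsets `B` of the edge set. -/
theorem count_nowhere_identity_G_flows
    {D : Type} [Fintype D] [Nonempty D] (σ α : Equiv.Perm D)
    (hinv : ∀ d, α (α d) = d) (hfpf : ∀ d, α d ≠ d)
    (hconn : MapConnected σ α)
    {G : Type} [Group G] [Fintype G]
    (ι : Type) [Fintype ι] (ρ : ι → FDRep ℂ G)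
    (hsimple : ∀ i, Simple (ρ i))
    (hpairwise : ∀ i j, Nonempty (ρ i ≅ ρ j) → i = j)
    (hcomplete : ∀ V : FDRep ℂ G, Simple V → ∃ i, Nonempty (V ≅ ρ i)) :
    (Nat.card {κ : D → G // IsGFlow σ α κ ∧ ∀ d, κ d ≠ 1} : ℂ)
      = ∑ᶠ B : Set (Quotient α.cycleSetoid),
          (-1 : ℂ) ^ (Nat.card ↥Bᶜ) *
            (Nat.card G : ℂ) ^ ((Nat.card ↥B : ℤ) - (σ.cycleCount : ℤ)) *
            ∏ᶠ C : Quotient (Relation.EqvGen.setoid (spanningRel σ α B)),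
              ∑ i, ((ρ i).character 1) ^ (componentEuler σ α B C) :=
  have : NeZero (Nat.card G : ℂ) := ⟨Nat.cast_ne_zero.mpr Nat.card_pos.ne'⟩
  count_nowhere_identity_G_flows_general σ α hinv hfpf ρ hsimple hpairwise hcomplete
end

section
/- Let G and G' be finite groups such that the multiset of degrees {χ_λ(1) : λ ∈ Irr(G)} equals the multiset {χ_μ(1) : μ ∈ Irr(G')} (i.e. there is a bijection Irr(G) → Irr(G') preserving degrees). Then for every connected combinatorial map M, the number of nowhere-identity G-flows on M equals the number of nowhere-identity G'-flows on M. -/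
open Equiv

/-!
A degree-preserving bijection of irreducible characters gives an isomorphism `φ : k[G] ≃ₐ[k] k[G']`,
since over an algebraically closed field of characteristic zero both group algebras are products of
matrix algebras of the same sizes. Left multiplication by `x` has trace `|G|` times the coefficient
of `x` at `1`, so `φ` preserves this coefficient `τ`. It therefore also preserves the element
`∑ g ≠ 1, g ⊗ g⁻¹`, which is determined by the algebra, its unit and the bilinear form `τ (x * y)`.

The indicator function of the vertex conditions extends from `D → G` to a multilinear form on
`D → k[G]`: the product over all vertices of `τ` of the product around the vertex. Summing it over
nowhere-identity labellings contracts it with one copy of `∑ g ≠ 1, g ⊗ g⁻¹` for each edge. Hence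
the number of nowhere-identity flows depends only on the algebra `k[G]`.
-/

universe u v

section ActionOnSimpleModules

variable (k : Type*) [Field k] {A : Type*} [Ring A] [Algebra k A] {ι : Type*} (M : ι → Type*)
  [∀ i, AddCommGroup (M i)] [∀ i, Module k (M i)] [∀ i, Module A (M i)]
  [∀ i, IsScalarTower k A (M i)]

/-- The action of a `k`-algebra `A` on a family of `A`-modules, as an algebra homomorphism into
the product of their `k`-linear endomorphism algebras. -/
def piLsmul : A →ₐ[k] Π i, Module.End k (M i) :=
  AlgHom.pi fun i => Algebra.lsmul k k (M i)

variable {k M}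

lemma piLsmul_injective (hA : Ring.jacobson A = ⊥)
    (hM : ∀ I : Ideal A, I.IsMaximal → ∃ i, Nonempty ((A ⧸ I) ≃ₗ[A] M i)) :
    Function.Injective (piLsmul k M : A →ₐ[k] _) := by
  rw [injective_iff_map_eq_zero]
  intro a ha
  rw [← Ideal.mem_bot, ← hA, Ring.jacobson_eq_sInf_isMaximal, Ideal.mem_sInf]
  intro I hI
  obtain ⟨i, ⟨e⟩⟩ := hM I hI
  have h : a • e (Submodule.Quotient.mk 1) = 0 := LinearMap.congr_fun (congr_fun ha i) _
  rw [← map_smul, LinearEquiv.map_eq_zero_iff] at h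
  simpa [← Submodule.Quotient.mk_smul] using h

variable [IsAlgClosed k] [∀ i, FiniteDimensional k (M i)] [∀ i, IsSimpleModule A (M i)]

lemma map_comm_of_pairwise_nonisomorphic (hM : ∀ i j, Nonempty (M i ≃ₗ[A] M j) → i = j)
    (F : Π i, Module.End k (M i)) {i j : ι} (f : M i →ₗ[A] M j) (m : M i) :
    F j (f m) = f (F i m) := by
  rcases LinearMap.bijective_or_eq_zero f with hf | rfl
  · obtain rfl := hM i j ⟨LinearEquiv.ofBijective f hf⟩
    obtain ⟨c, rfl⟩ := (IsSimpleModule.algebraMap_end_bijective_of_isAlgClosed k).surjective f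
    simp
  · simp

variable [Finite ι]

lemma pi_map_comm_of_pairwise_nonisomorphic (hM : ∀ i j, Nonempty (M i ≃ₗ[A] M j) → i = j)
    (F : Π i, Module.End k (M i)) (f : Module.End A (Π i, M i)) (m : Π i, M i) (j : ι) :
    F j (f m j) = f (fun i => F i (m i)) j := by
  classical
  have := Fintype.ofFinite ι
  have hf (m : Π i, M i) :
      f m j = ∑ i, (LinearMap.proj j ∘ₗ f ∘ₗ LinearMap.single A M i) (m i) := by
    conv_lhs => rw [← Finset.univ_sum_single m]
    simp
  simp only [hf, map_sum, map_comm_of_pairwise_nonisomorphic hM F]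

lemma piLsmul_surjective (hM : ∀ i j, Nonempty (M i ≃ₗ[A] M j) → i = j) :
    Function.Surjective (piLsmul k M : A →ₐ[k] _) := by
  classical
  have := Fintype.ofFinite ι
  intro F
  let F' : Module.End (Module.End A (Π i, M i)) (Π i, M i) :=
    { toFun m i := F i (m i)
      map_add' m m' := by ext; simp
      map_smul' f m := funext (pi_map_comm_of_pairwise_nonisomorphic hM F f m) }
  let b := Pi.basis fun i => Module.finBasis k (M i)
  obtain ⟨a, ha⟩ := jacobson_density F' (Finset.univ.image b)
  have h : LinearMap.pi (fun i => F i ∘ₗ LinearMap.proj i) = Algebra.lsmul k k (Π i, M i) a :=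
    b.ext fun x => ha _ (Finset.mem_image_of_mem _ (Finset.mem_univ x))
  refine ⟨a, ?_⟩
  ext i m
  simpa [piLsmul] using congr_fun (LinearMap.congr_fun h (Pi.single i m)).symm i

end ActionOnSimpleModules

lemma nonempty_pi_end_algEquiv {k ι ι' : Type*} [Field k] {V : ι → Type*} {W : ι' → Type*}
    [∀ i, AddCommGroup (V i)] [∀ i, Module k (V i)] [∀ i, FiniteDimensional k (V i)]
    [∀ i, AddCommGroup (W i)] [∀ i, Module k (W i)] [∀ i, FiniteDimensional k (W i)]
    (e : ι ≃ ι') (h : ∀ i, Module.finrank k (V i) = Module.finrank k (W (e i))) :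
    Nonempty ((Π i, Module.End k (V i)) ≃ₐ[k] Π i, Module.End k (W i)) :=
  ⟨(AlgEquiv.piCongrRight fun i => (LinearEquiv.ofFinrankEq _ _ (h i)).conjAlgEquiv k).trans
    (AlgEquiv.piCongrLeft k (fun i => Module.End k (W i)) e)⟩

section SimpleObjects

open CategoryTheory

lemma simple_obj_of_isClosedUnderSubobjects_essImage {C E : Type*} [Category* C] [Category* E]
    [Limits.HasZeroMorphisms C] [Limits.HasZeroMorphisms E] (F : C ⥤ E) [F.Full] [F.Faithful]
    [F.PreservesZeroMorphisms] [F.essImage.IsClosedUnderSubobjects] (X : C) [Simple X] :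
    Simple (F.obj X) where
  mono_isIso_iff_nonzero {Y} f _ := by
    obtain ⟨Z, ⟨e⟩⟩ := F.essImage.prop_of_mono f (F.obj_mem_essImage X)
    obtain ⟨g, hg⟩ := F.map_surjective (e.hom ≫ f)
    have : Mono (F.map g) := hg ▸ inferInstance
    have : Mono g := F.mono_of_mono_map this
    rw [← isIso_comp_left_iff e.hom f, ← hg, isIso_iff_of_reflects_iso g F,
      Simple.mono_isIso_iff_nonzero g, ne_eq, ← F.map_eq_zero_iff, hg, ne_eq,
      ← cancel_epi e.hom (h := 0), Limits.comp_zero]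

end SimpleObjects

section FDRepToModule

open CategoryTheory MonoidAlgebra

/-- The fully faithful functor from finite-dimensional representations of `G` to `k[G]`-modules,
sending `V` to `Representation.asModule V.ρ`. -/
noncomputable abbrev fdRepToModule (k : Type u) [Field k] (G : Type v) [Group G] :
    FDRep k G ⥤ ModuleCat.{u} k[G] :=
  forget₂ (FDRep k G) (Rep k G) ⋙ Rep.equivalenceModuleMonoidAlgebra.functor

section

variable {k : Type u} [Field k] {G : Type v} [Group G]

instance (V : FDRep k G) : FiniteDimensional k (Representation.asModule V.ρ) :=
  inferInstanceAs (FiniteDimensional k V)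

lemma fdRepToModule_essImage_of_finiteDimensional (M : Type u) [AddCommGroup M] [Module k M]
    [Module k[G] M] [IsScalarTower k k[G] M] [FiniteDimensional k M] :
    (fdRepToModule k G).essImage (ModuleCat.of _ M) :=
  let ρ : Representation k G M := Representation.ofModule' M
  have hρ (x : k[G]) (m : ρ.asModule) : ρ.asModuleEquiv (x • m) = x • ρ.asModuleEquiv m := by
    rw [ρ.asModuleEquiv_map_smul]
    simp [ρ, Representation.ofModule', Representation.asAlgebraHom]
  ⟨FDRep.of ρ, ⟨LinearEquiv.toModuleIso { ρ.asModuleEquiv with map_smul' := hρ }⟩⟩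

instance : (fdRepToModule k G).essImage.IsClosedUnderSubobjects where
  prop_of_mono {Y _} f _ := by
    rintro ⟨V, ⟨e⟩⟩
    let g : Y →ₗ[k[G]] Representation.asModule V.ρ := (f ≫ e.inv).hom
    have hg : Function.Injective g := (ModuleCat.mono_iff_injective (f ≫ e.inv)).mp inferInstance
    have : FiniteDimensional k (LinearMap.range g) :=
      inferInstanceAs (FiniteDimensional k ((LinearMap.range g).restrictScalars k))
    exact (fdRepToModule k G).essImage.prop_of_iso (LinearEquiv.ofInjective g hg).symm.toModuleIso
      (fdRepToModule_essImage_of_finiteDimensional _)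

instance (V : FDRep k G) [Simple V] : IsSimpleModule k[G] (Representation.asModule V.ρ) :=
  (simple_iff_isSimpleModule' _).mp
    (simple_obj_of_isClosedUnderSubobjects_essImage (fdRepToModule k G) V)

lemma nonempty_iso_of_asModule_linearEquiv {V W : FDRep k G}
    (e : Representation.asModule V.ρ ≃ₗ[k[G]] Representation.asModule W.ρ) : Nonempty (V ≅ W) :=
  ⟨(fdRepToModule k G).preimageIso e.toModuleIso⟩

lemma exists_asModule_linearEquiv_of_isSimpleModule {ι : Type*} {ρ : ι → FDRep k G}
    (hcomplete : ∀ V : FDRep k G, Simple V → ∃ i, Nonempty (V ≅ ρ i)) (M : Type u)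
    [AddCommGroup M] [Module k M] [Module k[G] M] [IsScalarTower k k[G] M]
    [FiniteDimensional k M] [IsSimpleModule k[G] M] :
    ∃ i, Nonempty (M ≃ₗ[k[G]] Representation.asModule (ρ i).ρ) := by
  obtain ⟨V, ⟨e⟩⟩ := fdRepToModule_essImage_of_finiteDimensional (k := k) (G := G) M
  have : Simple ((fdRepToModule k G).obj V) := Simple.of_iso e
  obtain ⟨i, ⟨e'⟩⟩ := hcomplete V ((fdRepToModule k G).simple_of_simple_obj V)
  exact ⟨i, ⟨(e.symm ≪≫ (fdRepToModule k G).mapIso e').toLinearEquiv⟩⟩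

end

section

variable {k : Type u} [Field k] [IsAlgClosed k] {G : Type u} [Group G] [Finite G]
  {ι : Type*} [Finite ι] {ρ : ι → FDRep k G}

lemma piLsmul_asModule_bijective [NeZero (Nat.card G : k)] (hsimple : ∀ i, Simple (ρ i))
    (hpairwise : ∀ i j, Nonempty (ρ i ≅ ρ j) → i = j)
    (hcomplete : ∀ V : FDRep k G, Simple V → ∃ i, Nonempty (V ≅ ρ i)) :
    Function.Bijective
      (piLsmul k (fun i => Representation.asModule (ρ i).ρ) : k[G] →ₐ[k] _) := by
  constructor
  · refine piLsmul_injective (IsSemisimpleRing.jacobson_eq_bot _) fun I hI => ?_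
    have : FiniteDimensional k (k[G] ⧸ I) :=
      inferInstanceAs (FiniteDimensional k (k[G] ⧸ I.restrictScalars k))
    have : IsSimpleModule k[G] (k[G] ⧸ I) := isSimpleModule_iff_isCoatom.mpr hI.out
    exact exists_asModule_linearEquiv_of_isSimpleModule hcomplete (k[G] ⧸ I)
  · exact piLsmul_surjective fun i j ⟨e⟩ => hpairwise i j (nonempty_iso_of_asModule_linearEquiv e)

theorem nonempty_groupAlgebra_algEquiv_of_degrees_eq [CharZero k] {G' : Type u} [Group G']
    [Finite G'] {ι' : Type*} {ρ' : ι' → FDRep k G'} (hsimple : ∀ i, Simple (ρ i))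
    (hpairwise : ∀ i j, Nonempty (ρ i ≅ ρ j) → i = j)
    (hcomplete : ∀ V : FDRep k G, Simple V → ∃ i, Nonempty (V ≅ ρ i))
    (hsimple' : ∀ i, Simple (ρ' i))
    (hpairwise' : ∀ i j, Nonempty (ρ' i ≅ ρ' j) → i = j)
    (hcomplete' : ∀ V : FDRep k G', Simple V → ∃ i, Nonempty (V ≅ ρ' i))
    (e : ι ≃ ι') (hdeg : ∀ i, (ρ i).character 1 = (ρ' (e i)).character 1) :
    Nonempty (k[G] ≃ₐ[k] k[G']) := by
  have : Finite ι' := .of_equiv ι e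
  simp only [FDRep.char_one, Nat.cast_inj] at hdeg
  obtain ⟨φ⟩ := nonempty_pi_end_algEquiv (V := fun i => Representation.asModule (ρ i).ρ)
    (W := fun i => Representation.asModule (ρ' i).ρ) e hdeg
  exact ⟨((AlgEquiv.ofBijective _ (piLsmul_asModule_bijective hsimple hpairwise hcomplete)).trans
    φ).trans (.symm <|
      .ofBijective _ (piLsmul_asModule_bijective hsimple' hpairwise' hcomplete'))⟩

end

end FDRepToModule

section GroupAlgebra

open MonoidAlgebra

/-- The linear form on the group algebra taking the coefficient at `1`; it is the trace of the
regular representation divided by the order of the group. -/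
noncomputable def coeffOne (R G : Type*) [CommSemiring R] [One G] : R[G] →ₗ[R] R :=
  (MonoidAlgebra.basis G R).coord 1

@[simp]
lemma coeffOne_apply {R G : Type*} [CommSemiring R] [One G] (x : R[G]) :
    coeffOne R G x = x.coeff 1 := rfl

lemma sum_coeff_smul_of {R G : Type*} [CommSemiring R] [MulOneClass G] [Fintype G] (x : R[G]) :
    ∑ g, x.coeff g • of R G g = x := by
  simpa using! (MonoidAlgebra.basis G R).sum_repr x

lemma multilinearMap_eq_sum_prod_coeff {R G M D : Type*} [CommSemiring R] [MulOneClass G]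
    [Fintype G] [AddCommMonoid M] [Module R M] [Fintype D] [DecidableEq D]
    (T : MultilinearMap R (fun _ : D => R[G]) M) (x : D → R[G]) :
    T x = ∑ κ : D → G, (∏ d, (x d).coeff (κ d)) • T fun d => of R G (κ d) := by
  conv_lhs => rw [← funext fun d => sum_coeff_smul_of (x d)]
  simp only [T.map_sum, T.map_smul_univ]

variable {R : Type*} [CommRing R]

lemma trace_lmul_algEquiv {A B : Type*} [Ring A] [Algebra R A] [Ring B] [Algebra R B]
    (φ : A ≃ₐ[R] B) (x : A) :
    LinearMap.trace R B (Algebra.lmul R B (φ x)) = LinearMap.trace R A (Algebra.lmul R A x) := by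
  rw [← LinearMap.trace_conj' _ φ.toLinearEquiv]
  congr
  ext y
  simp [LinearEquiv.conj_apply]

variable {G G' : Type*} [Group G] [Group G']

lemma trace_lmul_groupAlgebra [Finite G] (x : R[G]) :
    LinearMap.trace R R[G] (Algebra.lmul R R[G] x) = Nat.card G * coeffOne R G x := by
  classical
  have := Fintype.ofFinite G
  have hdiag (g : G) : LinearMap.toMatrix (MonoidAlgebra.basis G R) (MonoidAlgebra.basis G R)
      (Algebra.lmul R R[G] x) g g = coeffOne R G x := by
    rw [LinearMap.toMatrix_apply]
    simp [MonoidAlgebra.basis]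
  simp only [LinearMap.trace_eq_matrix_trace R (MonoidAlgebra.basis G R), Matrix.trace,
    Matrix.diag_apply, hdiag, Finset.sum_const, Finset.card_univ, Nat.card_eq_fintype_card,
    nsmul_eq_mul]

variable [Finite G'] [CharZero R] [NoZeroDivisors R]

section

variable [Finite G]

lemma coeffOne_comp_algEquiv (φ : R[G] ≃ₐ[R] R[G']) :
    coeffOne R G' ∘ₗ φ.toLinearMap = coeffOne R G := by
  have hcard : Nat.card G' = Nat.card G := by
    rw [← Module.finrank_eq_nat_card_basis (MonoidAlgebra.basis G R), φ.toLinearEquiv.finrank_eq,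
      Module.finrank_eq_nat_card_basis (MonoidAlgebra.basis G' R)]
  refine LinearMap.ext fun x => ?_
  have htrace := trace_lmul_algEquiv φ x
  rw [trace_lmul_groupAlgebra, trace_lmul_groupAlgebra, hcard] at htrace
  exact mul_left_cancel₀ (Nat.cast_ne_zero.mpr Nat.card_pos.ne') htrace

lemma coeff_algEquiv_of (φ : R[G] ≃ₐ[R] R[G']) (g : G) (h : G') :
    (φ (of R G g)).coeff h = (φ.symm (of R G' h⁻¹)).coeff g⁻¹ :=
  calc (φ (of R G g)).coeff h = coeffOne R G' (φ (φ.symm (of R G' h⁻¹) * of R G g)) := by simp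
    _ = coeffOne R G (φ.symm (of R G' h⁻¹) * of R G g) :=
      LinearMap.congr_fun (coeffOne_comp_algEquiv φ) _
    _ = (φ.symm (of R G' h⁻¹)).coeff g⁻¹ := by simp

end

variable [Fintype G]

open Classical in
lemma sum_coeff_algEquiv_of_mul_inv (φ : R[G] ≃ₐ[R] R[G']) (h h' : G') :
    ∑ g, (φ (of R G g)).coeff h * (φ (of R G g⁻¹)).coeff h' = if h' = h⁻¹ then 1 else 0 :=
  calc ∑ g, (φ (of R G g)).coeff h * (φ (of R G g⁻¹)).coeff h'
      = ∑ g, (φ.symm (of R G' h⁻¹)).coeff g * (φ (of R G g)).coeff h' := by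
        rw [← Equiv.sum_comp (Equiv.inv G)]
        simp only [Equiv.inv_apply, inv_inv, coeff_algEquiv_of φ _ h]
    _ = (φ (∑ g, (φ.symm (of R G' h⁻¹)).coeff g • of R G g)).coeff h' := by
        simp only [map_sum, map_smul, coeff_sum, Finsupp.finsetSum_apply, coeff_smul_apply,
          smul_eq_mul]
    _ = if h' = h⁻¹ then 1 else 0 := by
        rw [sum_coeff_smul_of, AlgEquiv.apply_symm_apply, of_apply, coeff_single,
          Finsupp.single_apply]
        simp only [eq_comm]

open Classical in
/-- In coordinates, `φ ⊗ φ` maps `∑ g ≠ 1, g ⊗ g⁻¹` to `∑ h ≠ 1, h ⊗ h⁻¹`. -/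
lemma sum_ne_one_coeff_algEquiv_of_mul_inv (φ : R[G] ≃ₐ[R] R[G']) (h h' : G') :
    ∑ g : {g : G // g ≠ 1}, (φ (of R G g)).coeff h * (φ (of R G g⁻¹)).coeff h' =
      if h ≠ 1 ∧ h' = h⁻¹ then 1 else 0 := by
  have hsum := sum_coeff_algEquiv_of_mul_inv φ h h'
  rw [Fintype.sum_eq_add_sum_subtype_ne _ 1, inv_one, map_one, map_one,
    ← eq_sub_iff_add_eq'] at hsum
  rw [hsum, MonoidAlgebra.one_def, coeff_single, Finsupp.single_apply, Finsupp.single_apply]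
  by_cases hh : h = 1
  · subst hh
    simp [eq_comm]
  · simp [hh, Ne.symm hh]

end GroupAlgebra

section Edges

variable {D : Type*} {α : Perm D}

/-- A choice of one dart from each edge of the involution `α`. -/
def IsOrientation (α : Perm D) (O : Set D) : Prop :=
  ∀ d, α d ∈ O ↔ d ∉ O

/-- A `G`-labelling of the edges of `α` that avoids `1`. -/
def IsNowhereIdentityLabelling {G : Type*} [Group G] (α : Perm D) (κ : D → G) : Prop :=
  IsGLabelling α κ ∧ ∀ d, κ d ≠ 1

lemma exists_isOrientation (hinv : ∀ d, α (α d) = d) (hfpf : ∀ d, α d ≠ d) :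
    ∃ O, IsOrientation α O := by
  refine ⟨{d | WellOrderingRel d (α d)}, fun d => ?_⟩
  simp only [Set.mem_ofPred_eq, hinv]
  refine ⟨asymm, fun h => ?_⟩
  rcases trichotomous_of WellOrderingRel d (α d) with h' | h' | h'
  · exact absurd h' h
  · exact absurd h'.symm (hfpf d)
  · exact h'

namespace IsOrientation

variable {O : Set D}

lemma prod_eq_prod_mul [Fintype D] {M : Type*} [CommMonoid M] [DecidablePred (· ∈ O)]
    (hO : IsOrientation α O) (F : D → M) : ∏ d, F d = ∏ d : O, F d * F (α d) := by
  have hα : ∏ d : {d // d ∉ O}, F d = ∏ d : O, F (α d) := by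
    rw [← Equiv.prod_comp (α.subtypeEquiv fun d => by simp [hO d] : O ≃ {d // d ∉ O})]
    rfl
  rw [Finset.prod_mul_distrib, ← hα, Fintype.prod_subtype_mul_prod_subtype]

variable {G : Type*} [Group G]

lemma isNowhereIdentityLabelling_iff (hO : IsOrientation α O) (hinv : ∀ d, α (α d) = d)
    (κ : D → G) :
    IsNowhereIdentityLabelling α κ ↔ ∀ d : O, κ d ≠ 1 ∧ κ (α d) = (κ d)⁻¹ := by
  refine ⟨fun h d => ⟨h.2 d, h.1 d⟩, fun h => forall_and.mp fun d => ?_⟩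
  by_cases hd : d ∈ O
  · exact (h ⟨d, hd⟩).symm
  · obtain ⟨hne, hlabel⟩ := h ⟨α d, (hO d).mpr hd⟩
    rw [hinv] at hlabel
    simp_all

open Classical in
/-- Nowhere-identity labellings correspond to arbitrary non-identity values on an orientation. -/
noncomputable def labellingEquiv (hO : IsOrientation α O) (hinv : ∀ d, α (α d) = d) :
    {κ : D → G // IsNowhereIdentityLabelling α κ} ≃ (O → {g : G // g ≠ 1}) where
  toFun κ d := ⟨κ.1 d, κ.2.2 d⟩
  invFun v := ⟨fun d => if hd : d ∈ O then v ⟨d, hd⟩ else (v ⟨α d, (hO d).mpr hd⟩)⁻¹, by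
    rw [hO.isNowhereIdentityLabelling_iff hinv]
    rintro ⟨d, hd⟩
    have := (v ⟨d, hd⟩).2
    simp [hd, hO d, hinv, this]⟩
  left_inv κ := by
    ext d
    by_cases hd : d ∈ O <;> simp [hd, κ.2.1 d]
  right_inv v := by
    ext d
    simp

open Classical in
lemma sum_labelling_prod [Fintype D] [Fintype G] {R : Type*} [CommSemiring R]
    (hO : IsOrientation α O) (hinv : ∀ d, α (α d) = d) (F : D → G → R) :
    ∑ κ : {κ : D → G // IsNowhereIdentityLabelling α κ}, ∏ d, F d (κ.1 d) =
      ∏ d : O, ∑ g : {g : G // g ≠ 1}, F d g * F (α d) g⁻¹ := by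
  rw [Finset.prod_univ_sum, Fintype.piFinset_univ]
  refine Fintype.sum_equiv (hO.labellingEquiv hinv) _ _ fun κ => ?_
  simp only [hO.prod_eq_prod_mul, κ.2.1 _, labellingEquiv, Equiv.coe_fn_mk]

end IsOrientation

open MonoidAlgebra

variable {R : Type*} [CommRing R] [CharZero R] [NoZeroDivisors R] {G G' : Type*} [Group G]
  [Group G'] [Fintype G] [Fintype D]

open Classical in
lemma sum_labelling_prod_coeff_algEquiv_of [Finite G'] (hinv : ∀ d, α (α d) = d)
    (hfpf : ∀ d, α d ≠ d) (φ : R[G] ≃ₐ[R] R[G']) (κ' : D → G') :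
    ∑ κ : {κ : D → G // IsNowhereIdentityLabelling α κ},
        ∏ d, (φ (of R G (κ.1 d))).coeff (κ' d) =
      if IsNowhereIdentityLabelling α κ' then 1 else 0 := by
  obtain ⟨O, hO⟩ := exists_isOrientation hinv hfpf
  rw [hO.sum_labelling_prod hinv fun d g => (φ (of R G g)).coeff (κ' d)]
  simp only [sum_ne_one_coeff_algEquiv_of_mul_inv, Fintype.prod_boole,
    hO.isNowhereIdentityLabelling_iff hinv]

open Classical in
lemma sum_labelling_multilinearMap_algEquiv_of [Fintype G'] (hinv : ∀ d, α (α d) = d)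
    (hfpf : ∀ d, α d ≠ d) (φ : R[G] ≃ₐ[R] R[G']) {M : Type*} [AddCommMonoid M] [Module R M]
    (T : MultilinearMap R (fun _ : D => R[G']) M) :
    ∑ κ : {κ : D → G // IsNowhereIdentityLabelling α κ}, T (fun d => φ (of R G (κ.1 d))) =
      ∑ κ' : {κ' : D → G' // IsNowhereIdentityLabelling α κ'}, T fun d => of R G' (κ'.1 d) := by
  simp only [multilinearMap_eq_sum_prod_coeff T fun _ => φ _]
  rw [Finset.sum_comm]
  simp only [← Finset.sum_smul, sum_labelling_prod_coeff_algEquiv_of hinv hfpf, ite_smul, one_smul,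
    zero_smul]
  rw [← Finset.sum_filter]
  exact Finset.sum_subtype _ (fun κ' => by simp) _

end Edges

section Vertices

variable {D : Type*} [Finite D]

lemma aroundProd_eq_one_of_sameCycle {G : Type*} [Group G] {σ : Perm D} {κ : D → G} {d d' : D}
    (h : σ.SameCycle d d') (hd : aroundProd σ κ d = 1) : aroundProd σ κ d' = 1 := by
  obtain ⟨n, rfl⟩ := h.exists_nat_pow_eq
  have horbit : Function.periodicOrbit σ (σ^[n] d) = Function.periodicOrbit σ d :=
    Function.periodicOrbit_apply_iterate_eq (σ.injective.mem_periodicPts d) n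
  obtain ⟨m, hm⟩ := (Cycle.coe_eq_coe.mp horbit.symm).map κ
  simp only [List.map_map, Function.comp_def, ← Perm.iterate_eq_pow, aroundProd] at hd hm ⊢
  exact hm ▸ List.prod_rotate_eq_one_of_prod_eq_one hd m

variable (σ : Perm D)

lemma forall_aroundProd_out_eq_one_iff {G : Type*} [Group G] (κ : D → G) :
    (∀ c : Quotient σ.cycleSetoid, aroundProd σ κ c.out = 1) ↔ ∀ d, aroundProd σ κ d = 1 :=
  ⟨fun h d => aroundProd_eq_one_of_sameCycle (Quotient.mk_out (s := σ.cycleSetoid) d) (h ⟦d⟧),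
    fun h c => h c.out⟩

/-- The enumeration of the darts vertex by vertex, each vertex `c` being traversed by powers of `σ`
starting from the representative `c.out`. -/
noncomputable def dartEquiv :
    (Σ c : Quotient σ.cycleSetoid, Fin (Function.minimalPeriod σ c.out)) ≃ D :=
  Equiv.ofBijective (fun x => σ^[x.2] x.1.out) <| by
    constructor
    · rintro ⟨c, i⟩ ⟨c', i'⟩ h
      obtain rfl : c = c' := by
        rw [← c.out_eq, ← c'.out_eq, Quotient.eq]
        simp only [Perm.iterate_eq_pow] at h
        exact Perm.sameCycle_pow_left.mp (Perm.sameCycle_pow_right.mp (h.sameCycle σ))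
      obtain rfl : i = i' := Fin.ext (Function.iterate_injOn_Iio_minimalPeriod i.2 i'.2 h)
      rfl
    · intro d
      obtain ⟨n, hn⟩ := Perm.SameCycle.exists_nat_pow_eq (Quotient.mk_out (s := σ.cycleSetoid) d)
      have hpos := Function.minimalPeriod_pos_of_mem_periodicPts
        (σ.injective.mem_periodicPts (⟦d⟧ : Quotient σ.cycleSetoid).out)
      refine ⟨⟨⟦d⟧, n % _, Nat.mod_lt _ hpos⟩, ?_⟩
      simpa [Function.iterate_mod_minimalPeriod_eq, Perm.iterate_eq_pow] using hn

variable [Fintype (Quotient σ.cycleSetoid)] {R A B : Type*} [CommSemiring R] [Semiring A]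
  [Algebra R A] [Semiring B] [Algebra R B]

/-- The multilinear form sending `x : D → A` to the product over all vertices of `τ` of the product
of `x` around the vertex. The product around a vertex `c` starts at the representative `c.out`;
this choice is immaterial when `τ (a * b) = τ (b * a)`, as for `τ = coeffOne R G`. -/
noncomputable def vertexForm (τ : A →ₗ[R] R) : MultilinearMap R (fun _ : D => A) R :=
  ((MultilinearMap.mkPiAlgebra R (Quotient σ.cycleSetoid) R).compMultilinearMap fun c =>
    τ.compMultilinearMap (.mkPiAlgebraFin R (Function.minimalPeriod σ c.out) A)).domDomCongr
      (dartEquiv σ)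

lemma vertexForm_apply (τ : A →ₗ[R] R) (x : D → A) :
    vertexForm σ τ x = ∏ c : Quotient σ.cycleSetoid,
      τ ((List.range (Function.minimalPeriod σ c.out)).map fun i => x ((σ ^ i) c.out)).prod := by
  have hdarts (c : Quotient σ.cycleSetoid) : List.ofFn (fun i => x (dartEquiv σ ⟨c, i⟩)) =
      (List.range (Function.minimalPeriod σ c.out)).map fun i => x ((σ ^ i) c.out) := by
    simp [dartEquiv, List.ofFn_eq_map, ← List.map_coe_finRange_eq_range, Perm.iterate_eq_pow,
      Function.comp_def]
  exact Finset.prod_congr rfl fun c _ => congrArg (fun l => τ l.prod) (hdarts c)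

lemma vertexForm_algHom (φ : A →ₐ[R] B) (τ : B →ₗ[R] R) (x : D → A) :
    vertexForm σ τ (fun d => φ (x d)) = vertexForm σ (τ ∘ₗ φ.toLinearMap) x := by
  simp only [vertexForm_apply, LinearMap.comp_apply, AlgHom.toLinearMap_apply, map_list_prod,
    List.map_map, Function.comp_def]

variable {G : Type*} [Group G]

open MonoidAlgebra

lemma vertexForm_of (κ : D → G) [Decidable (∀ d, aroundProd σ κ d = 1)] :
    vertexForm σ (coeffOne R G) (fun d => of R G (κ d)) =
      if ∀ d, aroundProd σ κ d = 1 then 1 else 0 := by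
  classical
  have hprod (c : Quotient σ.cycleSetoid) : ((List.range (Function.minimalPeriod σ c.out)).map
      fun i => of R G (κ ((σ ^ i) c.out))).prod = of R G (aroundProd σ κ c.out) := by
    rw [aroundProd, map_list_prod, List.map_map]
    rfl
  simp only [vertexForm_apply, hprod, ← forall_aroundProd_out_eq_one_iff]
  simp [of_apply, Finsupp.single_apply, eq_comm, Fintype.prod_boole]

end Vertices

section Counting

open MonoidAlgebra

variable {D : Type*} (σ : Perm D) {α : Perm D}

open Classical in
lemma natCard_nowhere_identity_flow_eq_sum_vertexForm [Fintype D]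
    [Fintype (Quotient σ.cycleSetoid)] (R G : Type*) [CommSemiring R] [Group G] [Fintype G] :
    (Nat.card {κ : D → G // IsGFlow σ α κ ∧ ∀ d, κ d ≠ 1} : R) =
      ∑ κ : {κ : D → G // IsNowhereIdentityLabelling α κ},
        vertexForm σ (coeffOne R G) fun d => of R G (κ.1 d) := by
  have hcard : Nat.card {κ : D → G // IsGFlow σ α κ ∧ ∀ d, κ d ≠ 1} =
      Nat.card {κ : {κ : D → G // IsNowhereIdentityLabelling α κ} //
        ∀ d, aroundProd σ κ.1 d = 1} := by
    rw [Nat.card_congr (Equiv.subtypeSubtypeEquivSubtypeInter _ (∀ d, aroundProd σ · d = 1))]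
    simp only [IsGFlow, IsNowhereIdentityLabelling, and_right_comm]
  rw [hcard, Nat.card_eq_fintype_card, Fintype.card_subtype, ← Finset.sum_boole]
  exact Finset.sum_congr rfl fun κ _ => (vertexForm_of σ κ.1).symm

theorem natCard_nowhere_identity_flow_eq_of_algEquiv {R : Type*} [CommRing R] [CharZero R]
    [NoZeroDivisors R] {G G' : Type*} [Group G] [Group G'] [Finite G] [Finite G'] [Finite D]
    (hinv : ∀ d, α (α d) = d) (hfpf : ∀ d, α d ≠ d) (φ : R[G] ≃ₐ[R] R[G']) :
    Nat.card {κ : D → G // IsGFlow σ α κ ∧ ∀ d, κ d ≠ 1} =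
      Nat.card {κ : D → G' // IsGFlow σ α κ ∧ ∀ d, κ d ≠ 1} := by
  classical
  have := Fintype.ofFinite D
  have := Fintype.ofFinite G
  have := Fintype.ofFinite G'
  have := Fintype.ofFinite (Quotient σ.cycleSetoid)
  rw [← Nat.cast_inj (R := R), natCard_nowhere_identity_flow_eq_sum_vertexForm,
    natCard_nowhere_identity_flow_eq_sum_vertexForm,
    ← sum_labelling_multilinearMap_algEquiv_of hinv hfpf φ]
  refine Finset.sum_congr rfl fun κ _ => ?_
  rw [← coeffOne_comp_algEquiv φ]
  exact (vertexForm_algHom σ φ.toAlgHom _ _).symm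

end Counting

open CategoryTheory in
theorem nowhere_identity_flow_count_depends_only_on_degrees_general
    {k : Type u} [Field k] [IsAlgClosed k] [CharZero k]
    {G G' : Type u} [Group G] [Finite G] [Group G'] [Finite G']
    {ι ι' : Type*} [Finite ι] (ρ : ι → FDRep k G) (ρ' : ι' → FDRep k G')
    (hsimple : ∀ i, Simple (ρ i))
    (hpairwise : ∀ i j, Nonempty (ρ i ≅ ρ j) → i = j)
    (hcomplete : ∀ V : FDRep k G, Simple V → ∃ i, Nonempty (V ≅ ρ i))
    (hsimple' : ∀ i, Simple (ρ' i))
    (hpairwise' : ∀ i j, Nonempty (ρ' i ≅ ρ' j) → i = j)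
    (hcomplete' : ∀ V : FDRep k G', Simple V → ∃ i, Nonempty (V ≅ ρ' i))
    (e : ι ≃ ι')
    (hdeg : ∀ i, (ρ i).character 1 = (ρ' (e i)).character 1)
    {D : Type*} [Finite D] (σ α : Equiv.Perm D)
    (hinv : ∀ d, α (α d) = d) (hfpf : ∀ d, α d ≠ d) :
    Nat.card {κ : D → G // IsGFlow σ α κ ∧ ∀ d, κ d ≠ 1}
      = Nat.card {κ : D → G' // IsGFlow σ α κ ∧ ∀ d, κ d ≠ 1} := by
  obtain ⟨φ⟩ := nonempty_groupAlgebra_algEquiv_of_degrees_eq hsimple hpairwise hcomplete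
    hsimple' hpairwise' hcomplete' e hdeg
  exact natCard_nowhere_identity_flow_eq_of_algEquiv σ hinv hfpf φ

open CategoryTheory in
/-- If two finite groups have the same multiset of degrees of irreducible characters
(witnessed by a degree-preserving bijection between their irreducible representations),
then every connected combinatorial map has the same number of nowhere-identity `G`-flows
and nowhere-identity `G'`-flows. -/
theorem nowhere_identity_flow_count_depends_only_on_degrees
    {G G' : Type} [Group G] [Fintype G] [Group G'] [Fintype G']
    (ι ι' : Type) [Fintype ι] [Fintype ι']
    (ρ : ι → FDRep ℂ G) (ρ' : ι' → FDRep ℂ G')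
    (hsimple : ∀ i, Simple (ρ i))
    (hpairwise : ∀ i j, Nonempty (ρ i ≅ ρ j) → i = j)
    (hcomplete : ∀ V : FDRep ℂ G, Simple V → ∃ i, Nonempty (V ≅ ρ i))
    (hsimple' : ∀ i, Simple (ρ' i))
    (hpairwise' : ∀ i j, Nonempty (ρ' i ≅ ρ' j) → i = j)
    (hcomplete' : ∀ V : FDRep ℂ G', Simple V → ∃ i, Nonempty (V ≅ ρ' i))
    (e : ι ≃ ι')
    (hdeg : ∀ i, (ρ i).character 1 = (ρ' (e i)).character 1)
    {D : Type} [Fintype D] [Nonempty D] (σ α : Equiv.Perm D)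
    (hinv : ∀ d, α (α d) = d) (hfpf : ∀ d, α d ≠ d)
    (hconn : MapConnected σ α) :
    Nat.card {κ : D → G // IsGFlow σ α κ ∧ ∀ d, κ d ≠ 1}
      = Nat.card {κ : D → G' // IsGFlow σ α κ ∧ ∀ d, κ d ≠ 1} := by
  exact nowhere_identity_flow_count_depends_only_on_degrees_general ρ ρ' hsimple hpairwise hcomplete
    hsimple' hpairwise' hcomplete' e hdeg σ α hinv hfpf
end
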